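/- arXiv:2006.00801 — 7 statements merged into one kernel-verified Lean document; each statement's English description precedes it below -/
import Mathlib

section
/- Let α₁, α₂ ∈ ℝ, n, m ∈ ℕ, and let W ∈ ℝ^{2n×m} with columns w₀,…,w_{m−1} satisfy W·𝟙 = 0 (i.e. Σ_{i=0}^{m−1} wᵢ = 0). Then T(W) = W·P·Wᵀ, where P ∈ ℝ^{m×m} is the matrix whose last row and last column are zero and whose upper-left (m−1)×(m−1) block has every diagonal entry equal to c₁ = 2α₂ − (α₁+α₂)², every entry strictly above the diagonal equal to c₂ = α₂ − (α₁+α₂)², and every entry strictly below the diagonal equal to α₂. -/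
/-!
Write `M` for the lower triangular coefficient matrix of `T`, so that `T(W) = W M Wᵀ` with
`M i j = α₂ [i = j] + (α₁+α₂)² [j < i]`. Entrywise, `P` differs from `M` by a term depending only on
the column plus a term depending only on the row (`Pmat_apply_eq`), i.e. by a matrix of the form
`𝟙 uᵀ + v 𝟙ᵀ`. Since `W 𝟙 = 0`, such a matrix contributes nothing to `W P Wᵀ`.
-/

open Matrix
/-- `T(W) = ∑_{i<m} ( α₂ wᵢ wᵢᵀ + (α₁+α₂)² ∑_{j<i} wᵢ wⱼᵀ )`. -/
noncomputable def Tmat {n m : ℕ} (α₁ α₂ : ℝ) (w : Fin m → Fin (2 * n) → ℝ) :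
    Matrix (Fin (2 * n)) (Fin (2 * n)) ℝ :=
  ∑ i : Fin m,
    (α₂ • Matrix.vecMulVec (w i) (w i)
      + (α₁ + α₂) ^ 2 •
          ∑ j ∈ Finset.univ.filter (fun j : Fin m => (j : ℕ) < (i : ℕ)),
            Matrix.vecMulVec (w i) (w j))

/-- The matrix `P ∈ ℝ^{m×m}`: last row and column zero, diagonal entries
`c₁ = 2α₂ − (α₁+α₂)²`, entries strictly above the diagonal `c₂ = α₂ − (α₁+α₂)²`,
entries strictly below the diagonal `α₂` (inside the upper-left (m−1)×(m−1) block). -/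
def Pmat (m : ℕ) (α₁ α₂ : ℝ) : Matrix (Fin m) (Fin m) ℝ :=
  Matrix.of fun i j =>
    if (i : ℕ) = m - 1 ∨ (j : ℕ) = m - 1 then 0
    else if (i : ℕ) = (j : ℕ) then 2 * α₂ - (α₁ + α₂) ^ 2
    else if (i : ℕ) < (j : ℕ) then α₂ - (α₁ + α₂) ^ 2
    else α₂

/-- `P = M + 𝟙 uᵀ + v 𝟙ᵀ`, where `u` is `α₂ - (α₁+α₂)²` off the last index and `0` there, and `v` is
`-α₂` at the last index and `0` elsewhere. -/
lemma Pmat_apply_eq {m : ℕ} (α₁ α₂ : ℝ) (i j : Fin m) :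
    Pmat m α₁ α₂ i j =
      ((if i = j then α₂ else 0) + (if (j : ℕ) < (i : ℕ) then (α₁ + α₂) ^ 2 else 0))
        + (if (j : ℕ) = m - 1 then 0 else α₂ - (α₁ + α₂) ^ 2)
        + (if (i : ℕ) = m - 1 then -α₂ else 0) := by
  have hi := i.isLt
  have hj := j.isLt
  simp only [Pmat, Matrix.of_apply, Fin.ext_iff]
  split_ifs <;> first | omega | ring

/-- Adding a column-only and a row-only term to the coefficients of a bilinear form does not change
its value on vectors whose entries sum to zero. -/
lemma sum_bilin_add_rank_one {ι : Type*} [Fintype ι] (M : ι → ι → ℝ) (u v x y : ι → ℝ)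
    (hx : ∑ i, x i = 0) (hy : ∑ i, y i = 0) :
    ∑ i, ∑ j, x i * (M i j + u j + v i) * y j = ∑ i, ∑ j, x i * M i j * y j := by
  have h1 : ∑ i, ∑ j, x i * (u j * y j) = 0 := by
    rw [← Finset.sum_mul_sum, hx, zero_mul]
  have h2 : ∑ i, ∑ j, (x i * v i) * y j = 0 := by
    rw [← Finset.sum_mul_sum, hy, mul_zero]
  have h3 : ∑ i, ∑ j, x i * (M i j + u j + v i) * y j =
      ∑ i, ∑ j, x i * M i j * y j + ∑ i, ∑ j, x i * (u j * y j)
        + ∑ i, ∑ j, (x i * v i) * y j := by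
    simp only [← Finset.sum_add_distrib]
    exact Finset.sum_congr rfl fun i _ => Finset.sum_congr rfl fun j _ => by ring
  rw [h3, h1, h2, add_zero, add_zero]

/-- Lemma 1: if the columns of `W` sum to zero, then `T(W) = W P Wᵀ`. -/
theorem stmt2 {n m : ℕ} (α₁ α₂ : ℝ) (w : Fin m → Fin (2 * n) → ℝ)
    (hsum : ∑ i : Fin m, w i = 0) :
    Tmat α₁ α₂ w =
      (Matrix.of fun p (i : Fin m) => w i p) * Pmat m α₁ α₂ *
        (Matrix.of fun p (i : Fin m) => w i p)ᵀ := by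
  have hs : ∀ p, ∑ i, w i p = 0 := fun p => by
    simpa using congrFun hsum p
  ext p q
  have hR : ((Matrix.of fun p (i : Fin m) => w i p) * Pmat m α₁ α₂ *
        (Matrix.of fun p (i : Fin m) => w i p)ᵀ) p q
      = ∑ i, ∑ j, w i p * Pmat m α₁ α₂ i j * w j q := by
    simp only [Matrix.mul_apply, Matrix.transpose_apply, Matrix.of_apply, Finset.sum_mul]
    exact Finset.sum_comm
  rw [hR]
  simp only [Pmat_apply_eq]
  rw [sum_bilin_add_rank_one _ _ _ (fun i => w i p) (fun j => w j q) (hs p) (hs q)]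
  simp only [Tmat, Matrix.sum_apply, Matrix.add_apply, Matrix.smul_apply, Matrix.vecMulVec_apply,
    smul_eq_mul, Finset.sum_filter, mul_add, add_mul, Finset.sum_add_distrib]
  congr 1
  · refine Finset.sum_congr rfl fun i _ => ?_
    simp only [mul_ite, ite_mul, mul_zero, zero_mul, Finset.sum_ite_eq, Finset.mem_univ, if_true]
    ring
  · refine Finset.sum_congr rfl fun i _ => ?_
    rw [Finset.mul_sum]
    refine Finset.sum_congr rfl fun j _ => ?_
    split_ifs <;> simp only [Matrix.vecMulVec_apply, Matrix.zero_apply] <;> ring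
end

section
/- Let α₁, α₂ ∈ ℝ with α₁ + α₂ ≠ 0 and 2α₂ − (α₁+α₂)² = 0, let T_d ∈ ℝ^{2n×2n} be skew-symmetric with rank r := rk(T_d), set m := r + 1, and assume the skew-symmetric matrix C(r) (see context) is invertible. Then there exists W ∈ ℝ^{2n×m} such that W·P·Wᵀ = T_d and W·𝟙 = 0, where P ∈ ℝ^{m×m} is the matrix whose last row and last column are zero and whose upper-left (m−1)×(m−1) block has every diagonal entry equal to c₁ = 2α₂ − (α₁+α₂)², every entry strictly above the diagonal equal to c₂ = α₂ − (α₁+α₂)², and every entry strictly below the diagonal equal to α₂. -/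
/-!
Because the last row and column of `P` vanish, the last column of `W` is free, and choosing it as
minus the sum of the others gives `W𝟙 = 0`. When `2α₂ = (α₁+α₂)²` the remaining block of `P`
is `-α₂ • A(r)` with `α₂ ≠ 0`, so the claim reduces to writing a skew-symmetric matrix of rank at
most `r` as `V A(r) Vᵀ` (`exists_factor_Amat`).

This is proved by symplectic Gram–Schmidt elimination. If `T i j ≠ 0`, subtracting the wedge
`a bᵀ - b aᵀ` of suitable multiples of columns `i` and `j` clears rows `i` and `j` and lowers the
rank by at least two (`rank_elim_add_two_le`). If the remainder is `V A(r) Vᵀ` and `s = V𝟙`, then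
prepending the columns `a + s` and `b - s` to `V` gives the factorization for `A(r+2)`, because
`(a + s) ∧ (b - s) + (a + b) ∧ s = a ∧ b`.
-/

open Matrix

/-- `ε(m) = (m−1)⁻¹ (1 − m^{−1/2})`. -/
noncomputable def epsFun (m : ℕ) : ℝ := ((m : ℝ) - 1)⁻¹ * (1 - (Real.sqrt m)⁻¹)

/-- `A(m)`: the skew-symmetric matrix with every entry strictly above the diagonal `1`
(and hence every entry strictly below the diagonal `−1`). -/
def Amat (m : ℕ) : Matrix (Fin m) (Fin m) ℝ :=
  Matrix.of fun i j =>
    if (i : ℕ) < (j : ℕ) then 1 else if (j : ℕ) < (i : ℕ) then -1 else 0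

/-- `b = (0, 2, 4, …, 2(m−1))ᵀ`. -/
def bVec (m : ℕ) : Fin m → ℝ := fun i => 2 * (i : ℝ)

/-- `B(m) = 𝟙bᵀ − b𝟙ᵀ`. -/
def Bmat (m : ℕ) : Matrix (Fin m) (Fin m) ℝ :=
  Matrix.vecMulVec (fun _ => 1) (bVec m) - Matrix.vecMulVec (bVec m) (fun _ => 1)

/-- `C(m) = A(m) + ε(m+1)·B(m)`. -/
noncomputable def Cmat (m : ℕ) : Matrix (Fin m) (Fin m) ℝ :=
  Amat m + epsFun (m + 1) • Bmat m

/-- One step of skew-symmetric elimination with pivot `T i j`: for skew-symmetric `T` it clears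
rows and columns `i` and `j`. -/
noncomputable def skewElim {ι : Type*} (T : Matrix ι ι ℝ) (i j : ι) : Matrix ι ι ℝ :=
  Matrix.of fun k l => T k l - (T i j)⁻¹ * (T k i * T l j - T k j * T l i)

lemma skew_apply {ι : Type*} {T : Matrix ι ι ℝ} (hT : Tᵀ = -T) (k l : ι) :
    T k l = - T l k := by
  have := congrFun (congrFun hT l) k
  simpa using this

lemma skewElim_skew {ι : Type*} {T : Matrix ι ι ℝ} (hT : Tᵀ = -T) (i j : ι) :
    (skewElim T i j)ᵀ = -skewElim T i j := by
  ext k l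
  simp only [skewElim, transpose_apply, of_apply, Matrix.neg_apply]
  rw [skew_apply hT l k]
  ring

lemma skewElim_row_left {ι : Type*} {T : Matrix ι ι ℝ} (hT : Tᵀ = -T) {i j : ι}
    (hij : T i j ≠ 0) (l : ι) : skewElim T i j i l = 0 := by
  have hii : T i i = 0 := by linarith [skew_apply hT i i]
  simp only [skewElim, of_apply, hii, skew_apply hT l i]
  field_simp
  ring

lemma skewElim_row_right {ι : Type*} {T : Matrix ι ι ℝ} (hT : Tᵀ = -T) {i j : ι}
    (hij : T i j ≠ 0) (l : ι) : skewElim T i j j l = 0 := by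
  have hjj : T j j = 0 := by linarith [skew_apply hT j j]
  simp only [skewElim, of_apply, hjj, skew_apply hT l j, skew_apply hT j i]
  field_simp
  ring

/-- The range of the eliminated matrix lies in `{y ∈ range T | y i = 0 ∧ y j = 0}`, and imposing
the two coordinate conditions one after the other drops the dimension each time: columns `j` and
`i` of `T` witness that the inclusions are strict. -/
lemma rank_elim_add_two_le {ι : Type*} [Fintype ι] {T : Matrix ι ι ℝ}
    (hT : Tᵀ = -T) {i j : ι} (hij : T i j ≠ 0) : (skewElim T i j).rank + 2 ≤ T.rank := by
  classical
  have hii : T i i = 0 := by linarith [skew_apply hT i i]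
  have hcol (k : ι) : (fun l => T l k) ∈ LinearMap.range T.mulVecLin :=
    ⟨Pi.single k 1, by ext l; simp⟩
  let M : Submodule ℝ (ι → ℝ) := LinearMap.range T.mulVecLin ⊓ LinearMap.ker (LinearMap.proj i)
  have h1 : LinearMap.range (skewElim T i j).mulVecLin ≤ M := by
    rintro _ ⟨x, rfl⟩
    refine ⟨?_, ?_⟩
    · have : (skewElim T i j).mulVecLin x = T.mulVecLin x
          - ((T i j)⁻¹ * ∑ l, T l j * x l) • (fun l => T l i)
          + ((T i j)⁻¹ * ∑ l, T l i * x l) • (fun l => T l j) := by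
        ext k
        simp only [skewElim, mulVecLin_apply, mulVec, dotProduct, of_apply, Pi.add_apply,
          Pi.sub_apply, Pi.smul_apply, smul_eq_mul, Finset.mul_sum, Finset.sum_mul,
          ← Finset.sum_sub_distrib, ← Finset.sum_add_distrib]
        exact Finset.sum_congr rfl fun l _ => by ring
      rw [this]
      exact Submodule.add_mem _ (Submodule.sub_mem _ ⟨x, rfl⟩ (Submodule.smul_mem _ _ (hcol i)))
        (Submodule.smul_mem _ _ (hcol j))
    · simp [mulVec, dotProduct, skewElim_row_left hT hij]
  have h1' : LinearMap.range (skewElim T i j).mulVecLin < M := by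
    refine lt_of_le_of_ne h1 fun he => ?_
    have hm : (fun l => T l i) ∈ M := ⟨hcol i, by simp [hii]⟩
    rw [← he] at hm
    obtain ⟨x, hx⟩ := hm
    have := congrFun hx j
    simp only [mulVecLin_apply, mulVec, dotProduct, skewElim_row_right hT hij, zero_mul,
      Finset.sum_const_zero] at this
    exact hij (by rw [skew_apply hT i j, ← this, neg_zero])
  have h2 : M < LinearMap.range T.mulVecLin := by
    refine lt_of_le_of_ne inf_le_left fun he => ?_
    have hm := hcol j
    rw [← he] at hm
    exact hij (by simpa using hm.2)
  have := Submodule.finrank_lt_finrank_of_lt h1'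
  have := Submodule.finrank_lt_finrank_of_lt h2
  unfold Matrix.rank
  omega

lemma mul_mul_transpose_apply {ι κ : Type*} [Fintype κ] (V : Matrix ι κ ℝ) (A : Matrix κ κ ℝ)
    (k l : ι) : (V * A * Vᵀ) k l = ∑ p, ∑ q, V k p * A p q * V l q := by
  simp only [mul_apply, transpose_apply, Finset.sum_mul]
  exact Finset.sum_comm

/-- The form `A(r+2)` expanded along its first two rows and columns. -/
lemma Amat_add_two_form (r : ℕ) (x y : Fin r → ℝ) (x₀ x₁ y₀ y₁ : ℝ) :
    ∑ p, ∑ q, (Fin.cons x₀ (Fin.cons x₁ x) : Fin (r + 2) → ℝ) p * Amat (r + 2) p q *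
        (Fin.cons y₀ (Fin.cons y₁ y) : Fin (r + 2) → ℝ) q =
      (x₀ * y₁ - x₁ * y₀) + (x₀ + x₁) * ∑ q, y q - (∑ p, x p) * (y₀ + y₁)
        + ∑ p, ∑ q, x p * Amat r p q * y q := by
  have h00 : Amat (r + 2) 0 0 = 0 := by simp [Amat]
  have h01 : Amat (r + 2) 0 (Fin.succ 0) = 1 := by simp [Amat]
  have h10 : Amat (r + 2) (Fin.succ 0) 0 = -1 := by simp [Amat]
  have h11 : Amat (r + 2) (Fin.succ 0) (Fin.succ 0) = 0 := by simp [Amat]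
  have h0 (q : Fin r) : Amat (r + 2) 0 q.succ.succ = 1 := by simp [Amat]
  have h1 (q : Fin r) : Amat (r + 2) (Fin.succ 0) q.succ.succ = 1 := by
    simp [Amat, -Fin.val_fin_lt]
  have h0' (q : Fin r) : Amat (r + 2) q.succ.succ 0 = -1 := by simp [Amat]
  have h1' (q : Fin r) : Amat (r + 2) q.succ.succ (Fin.succ 0) = -1 := by
    simp [Amat, -Fin.val_fin_lt]
  have h (p q : Fin r) : Amat (r + 2) p.succ.succ q.succ.succ = Amat r p q := by simp [Amat]
  simp only [Fin.sum_univ_succ, Fin.cons_zero, Fin.cons_succ, h00, h01, h10, h11, h0, h1, h0', h1',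
    h, Finset.sum_add_distrib, ← Finset.mul_sum, ← Finset.sum_mul]
  ring

/-- A skew-symmetric matrix of rank at most `r` is `V A(r) Vᵀ` for some `V`. The parity of `r` is
irrelevant, since the rank drops by at least two at each elimination step. -/
lemma exists_factor_Amat {ι : Type*} [Fintype ι] (r : ℕ) (T : Matrix ι ι ℝ)
    (hT : Tᵀ = -T) (hr : T.rank ≤ r) : ∃ V : Matrix ι (Fin r) ℝ, V * Amat r * Vᵀ = T := by
  induction r using Nat.strong_induction_on generalizing T with
  | _ r ih =>
  by_cases h0 : T = 0
  · exact ⟨0, by simp [h0]⟩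
  obtain ⟨i, j, hij⟩ : ∃ i j, T i j ≠ 0 := by
    by_contra! h
    exact h0 (by ext i j; exact h i j)
  have hrk := rank_elim_add_two_le hT hij
  obtain ⟨r, rfl⟩ : ∃ r', r = r' + 2 := ⟨r - 2, by omega⟩
  obtain ⟨V, hV⟩ := ih r (by omega) _ (skewElim_skew hT i j) (by omega)
  -- The shifts by `± V𝟙` cancel the interaction of the new columns with `V` through `A(r+2)`.
  refine ⟨Matrix.of fun k => Fin.cons ((T i j)⁻¹ * T k i + ∑ q, V k q)
    (Fin.cons (T k j - ∑ q, V k q) (V k)), ?_⟩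
  ext k l
  have hkl := congrFun (congrFun hV k) l
  rw [mul_mul_transpose_apply] at hkl ⊢
  simp only [of_apply]
  rw [Amat_add_two_form, hkl]
  simp only [skewElim, of_apply]
  ring

/-- Corollary: existence of an exploration sequence matrix of minimal length
for skew-symmetric `T_d` in the case `2α₂ − (α₁+α₂)² = 0`: with `m = rk(T_d) + 1`,
there exists `W ∈ ℝ^{2n×m}` with `W P Wᵀ = T_d` and `W𝟙 = 0`. -/
theorem stmt3 {n : ℕ} (α₁ α₂ : ℝ) (hα : α₁ + α₂ ≠ 0)
    (hparam : 2 * α₂ - (α₁ + α₂) ^ 2 = 0)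
    (Td : Matrix (Fin (2 * n)) (Fin (2 * n)) ℝ) (hskew : Tdᵀ = -Td)
    (hC : IsUnit (Cmat Td.rank)) :
    ∃ W : Matrix (Fin (2 * n)) (Fin (Td.rank + 1)) ℝ,
      W * Pmat (Td.rank + 1) α₁ α₂ * Wᵀ = Td ∧
      W.mulVec (fun _ => 1) = 0 := by
  have hα₂ : α₂ ≠ 0 := by
    rintro rfl
    exact hα (by simpa using hparam)
  obtain ⟨V, hV⟩ := exists_factor_Amat Td.rank ((-α₂)⁻¹ • Td)
    (by rw [transpose_smul, hskew, smul_neg])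
    (by
      rw [← Matrix.one_mul Td, ← Matrix.smul_mul]
      exact (Matrix.rank_mul_le_right _ _).trans_eq (by rw [Matrix.one_mul]))
  -- The appended last column makes every row sum to zero and meets only zeros of `P`.
  refine ⟨Matrix.of fun k => Fin.snoc (V k) (-∑ q, V k q), ?_, ?_⟩
  · have hP (p q : Fin Td.rank) :
        Pmat (Td.rank + 1) α₁ α₂ p.castSucc q.castSucc = -α₂ * Amat Td.rank p q := by
      have hp := p.isLt.ne
      have hq := q.isLt.ne
      simp only [Pmat, Amat, of_apply, Fin.val_castSucc, Nat.add_sub_cancel, hp, hq, or_self,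
        if_false]
      split_ifs <;> first | omega | linarith
    have hTd : Td = -α₂ • (V * Amat Td.rank * Vᵀ) := by
      rw [hV, smul_smul, mul_inv_cancel₀ (neg_ne_zero.mpr hα₂), one_smul]
    ext k l
    have hkl := congrFun (congrFun hTd k) l
    rw [Matrix.smul_apply, mul_mul_transpose_apply] at hkl
    rw [mul_mul_transpose_apply, hkl]
    have hl (p) : Pmat (Td.rank + 1) α₁ α₂ p (Fin.last _) = 0 := by simp [Pmat]
    have hl' (p) : Pmat (Td.rank + 1) α₁ α₂ (Fin.last _) p = 0 := by simp [Pmat]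
    simp only [Fin.sum_univ_castSucc, of_apply, Fin.snoc_castSucc, Fin.snoc_last, hP, hl, hl',
      mul_zero, zero_mul, add_zero, Finset.sum_const_zero, smul_eq_mul, Finset.mul_sum]
    exact Finset.sum_congr rfl fun p _ => Finset.sum_congr rfl fun q _ => by ring
  · ext k
    simp [mulVec, dotProduct, Fin.sum_univ_castSucc]
end

section
/- Let α₁, α₂ ∈ ℝ with α₁ + α₂ ≠ 0 and 2α₂ − (α₁+α₂)² ≠ 0, and let T_d ∈ ℝ^{2n×2n} be normal (T_d T_dᵀ = T_dᵀ T_d) with (2α₂ − (α₁+α₂)²)·(T_d + T_dᵀ) positive definite. Assume the interlacing property: for every m ≥ 2, the sorted imaginary parts ω₁^m ≥ … ≥ ω_{⌈m/2⌉}^m ≥ 0 of the eigenvalues ±ω_k^m i of the skew-symmetric matrix C(m) (see context) satisfy ω_k^{m+1} > ω_k^m > ω_{k+1}^{m+1} ≥ 0 for k = 1,…,⌊m/2⌋. Then there exists m ≥ rk(T_d) + 1 and W ∈ ℝ^{2n×m} such that W·P·Wᵀ = T_d and W·𝟙 = 0, where P ∈ ℝ^{m×m} is the matrix whose last row and last column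 are zero and whose upper-left (m−1)×(m−1) block has every diagonal entry equal to c₁ = 2α₂ − (α₁+α₂)², every entry strictly above the diagonal equal to c₂ = α₂ − (α₁+α₂)², and every entry strictly below the diagonal equal to α₂. -/
/-!
The symmetric part of the nonzero block of `P` is `(c₁/2)(I + 𝟙𝟙ᵀ)` and its skew part is
`-((α₁+α₂)²/2) A`.  If `U𝟙 = 0`, then `W = [U | 0]` satisfies `W𝟙 = 0` and
`W P Wᵀ = (c₁/2) U Uᵀ - ((α₁+α₂)²/2) U A Uᵀ`.  It therefore suffices to realize an arbitrary pair
`(X, Y)`, with `X` positive definite and `Y` skew-symmetric, as `(U Uᵀ, U A Uᵀ)` with `U𝟙 = 0`.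

Placing two matrices `U`, `U'` side by side adds the column sums and the Gram matrices, and adds
the matrices `U A Uᵀ` up to the term `s s'ᵀ - s' sᵀ`, where `s`, `s'` are the column sums
(`Reach.append`).  Hence the realizable pairs with zero column sum are closed under addition.
Traversing the square `x+y, x-y, -x-y, -x+y` with each column repeated `M` times realizes
`(4M (xxᵀ + yyᵀ), -4M² (xyᵀ - yxᵀ))` (`Reach.square`): the ratio of the skew part to the symmetric
part is unbounded in `M`.  Rescaling, and mixing both orientations of the square, realizes
`(xxᵀ + yyᵀ, κ (xyᵀ - yxᵀ))` for every real `κ` (`Reach.pair`).  Finally write `X = BᵀB` with `B`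
invertible and sum such pairs over all pairs of rows of `B`, the coefficients `κ` being read off
from `B⁻ᵀ Y B⁻¹` (`Reach.of_posDef`).
-/

open Matrix Polynomial

/-- `ω : ℕ → ℕ → ℝ` lists, for each `m ≥ 2`, the sorted imaginary parts
`ω m 1 ≥ ω m 2 ≥ … ≥ ω m ⌈m/2⌉ ≥ 0` of the eigenvalues `± (ω m k) i` of the real
skew-symmetric matrix `C(m)`; this is encoded via the characteristic polynomial
`charpoly(C(m)) = X^{m mod 2} ∏_{k=1}^{⌊m/2⌋} (X² + (ω m k)²)` together with
monotonicity, nonnegativity, and (for odd `m`) `ω m ⌈m/2⌉ = 0`. -/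
def IsSortedImagEigenvalues (ω : ℕ → ℕ → ℝ) : Prop :=
  ∀ m : ℕ, 2 ≤ m →
    (∀ k l : ℕ, 1 ≤ k → k ≤ l → l ≤ (m + 1) / 2 → ω m l ≤ ω m k) ∧
    (∀ k : ℕ, 1 ≤ k → k ≤ (m + 1) / 2 → 0 ≤ ω m k) ∧
    (Cmat m).charpoly =
      X ^ (m % 2) * ∏ k ∈ Finset.Icc 1 (m / 2), (X ^ 2 + C ((ω m k) ^ 2)) ∧
    (m % 2 = 1 → ω m ((m + 1) / 2) = 0)

/-- The triple `(s, X, Y)` consists of the column sum `U𝟙`, the Gram matrix `U Uᵀ` and the skew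
form `U A Uᵀ` of some matrix `U` with any number of columns. -/
def Reach {d : ℕ} (s : Fin d → ℝ) (X Y : Matrix (Fin d) (Fin d) ℝ) : Prop :=
  ∃ (N : ℕ) (U : Matrix (Fin d) (Fin N) ℝ),
    U *ᵥ (fun _ => 1) = s ∧ U * Uᵀ = X ∧ U * Amat N * Uᵀ = Y

/-- The wedge `x yᵀ - y xᵀ` of two vectors, as a skew-symmetric matrix. -/
def wedge {d : ℕ} (x y : Fin d → ℝ) : Matrix (Fin d) (Fin d) ℝ :=
  vecMulVec x y - vecMulVec y x

lemma Reach.zero {d : ℕ} : Reach (0 : Fin d → ℝ) 0 0 :=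
  ⟨0, 0, by simp, by simp, by simp⟩

lemma Reach.single {d : ℕ} (v : Fin d → ℝ) : Reach v (vecMulVec v v) 0 := by
  refine ⟨1, of fun i _ => v i, ?_, ?_, ?_⟩
  · ext i; simp [mulVec, dotProduct]
  · ext i j; simp [mul_apply, vecMulVec]
  · ext i j; simp [mul_apply, Amat]

lemma Reach.append {d : ℕ} {s s' : Fin d → ℝ} {X Y X' Y' : Matrix (Fin d) (Fin d) ℝ}
    (h : Reach s X Y) (h' : Reach s' X' Y') :
    Reach (s + s') (X + X') (Y + Y' + wedge s s') := by
  obtain ⟨N, U, rfl, rfl, rfl⟩ := h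
  obtain ⟨N', U', rfl, rfl, rfl⟩ := h'
  refine ⟨N + N', of fun i => Fin.append (U i) (U' i), ?_, ?_, ?_⟩
  · ext i; simp [mulVec, dotProduct, Fin.sum_univ_add]
  · ext i j; simp [mul_apply, Fin.sum_univ_add]
  · -- the four blocks of `A(N + N')` are `A(N)`, `𝟙𝟙ᵀ`, `-𝟙𝟙ᵀ`, `A(N')`
    have h11 (k l : Fin N) : Amat (N + N') (Fin.castAdd N' k) (Fin.castAdd N' l) = Amat N k l :=
      rfl
    have h22 (k l : Fin N') : Amat (N + N') (Fin.natAdd N k) (Fin.natAdd N l) = Amat N' k l := by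
      simp [Amat]
    have h12 (k : Fin N) (l : Fin N') :
        Amat (N + N') (Fin.castAdd N' k) (Fin.natAdd N l) = 1 := by
      have h : (k : ℕ) < N + l := by omega
      simp only [Amat, of_apply, Fin.val_castAdd, Fin.val_natAdd, if_pos h]
    have h21 (k : Fin N') (l : Fin N) :
        Amat (N + N') (Fin.natAdd N k) (Fin.castAdd N' l) = -1 := by
      have h : (l : ℕ) < N + k := by omega
      simp only [Amat, of_apply, Fin.val_castAdd, Fin.val_natAdd, if_pos h, if_neg h.not_gt]
    ext i j
    simp only [mul_apply, Fin.sum_univ_add, transpose_apply, of_apply, Fin.append_left,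
      Fin.append_right, h11, h12, h21, h22, Matrix.add_apply, wedge, Matrix.sub_apply, vecMulVec_apply, mulVec,
      dotProduct, mul_one, mul_neg, Finset.sum_neg_distrib, add_mul, Finset.sum_add_distrib,
      neg_mul, ← Finset.mul_sum]
    ring

/-- Repeating a single column `v` creates no skew part. -/
lemma Reach.repeat {d : ℕ} (v : Fin d → ℝ) (M : ℕ) :
    Reach ((M : ℝ) • v) ((M : ℝ) • vecMulVec v v) 0 := by
  induction M with
  | zero => simpa using Reach.zero
  | succ M ih =>
    convert ih.append (Reach.single v) using 1
    · push_cast; module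
    · push_cast; module
    · simp [wedge]

/-- Traversing a square with `M` steps per corner: the Gram matrix grows like `M`, the enclosed
area like `M²`. -/
lemma Reach.square {d : ℕ} (x y : Fin d → ℝ) (M : ℕ) :
    Reach 0 ((4 * M : ℝ) • (vecMulVec x x + vecMulVec y y)) (-(4 * M ^ 2 : ℝ) • wedge x y) := by
  convert (((Reach.repeat (x + y) M).append (Reach.repeat (x - y) M)).append
    (Reach.repeat (-x - y) M)).append (Reach.repeat (-x + y) M) using 1
  · module
  · ext i j; simp [vecMulVec_apply]; ring
  · ext i j; simp [wedge, vecMulVec_apply]; ring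

lemma Reach.add {d : ℕ} {X Y X' Y' : Matrix (Fin d) (Fin d) ℝ}
    (h : Reach 0 X Y) (h' : Reach 0 X' Y') : Reach 0 (X + X') (Y + Y') := by
  simpa [wedge] using h.append h'

lemma Reach.sum {d : ℕ} {ι : Type*} (t : Finset ι) (X Y : ι → Matrix (Fin d) (Fin d) ℝ)
    (h : ∀ i, Reach 0 (X i) (Y i)) : Reach 0 (∑ i ∈ t, X i) (∑ i ∈ t, Y i) := by
  classical
  induction t using Finset.induction_on with
  | empty => simpa using Reach.zero
  | insert a t ha ih => simpa [Finset.sum_insert ha] using (h a).add ih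

/-- The realizable pairs with zero column sum form a cone, since `U` can be rescaled by `√r`. -/
lemma Reach.smul {d : ℕ} {X Y : Matrix (Fin d) (Fin d) ℝ} (h : Reach 0 X Y) {r : ℝ}
    (hr : 0 ≤ r) : Reach 0 (r • X) (r • Y) := by
  obtain ⟨N, U, hU, rfl, rfl⟩ := h
  refine ⟨N, √r • U, by simp [smul_mulVec, hU], ?_, ?_⟩
  · simp [smul_smul, Real.mul_self_sqrt hr]
  · simp [smul_smul, Real.mul_self_sqrt hr]

lemma Reach.pair {d : ℕ} (x y : Fin d → ℝ) (κ : ℝ) :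
    Reach 0 (vecMulVec x x + vecMulVec y y) (κ • wedge x y) := by
  obtain ⟨M, hM⟩ := exists_nat_gt |κ|
  have hM0 : (0 : ℝ) < M := (abs_nonneg κ).trans_lt hM
  obtain ⟨h1, h2⟩ := abs_lt.mp hM
  -- weights `p`, `q ≥ 0` with `4M(p + q) = 1` and `4M²(q - p) = κ`
  have hp : 0 ≤ (M - κ) / (8 * M ^ 2 : ℝ) := div_nonneg (by linarith) (by positivity)
  have hq : 0 ≤ (M + κ) / (8 * M ^ 2 : ℝ) := div_nonneg (by linarith) (by positivity)
  convert ((Reach.square x y M).smul hp).add ((Reach.square y x M).smul hq) using 1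
  · ext i j
    simp only [Matrix.add_apply, Matrix.smul_apply, smul_eq_mul]
    field_simp
    ring
  · ext i j
    simp only [Matrix.add_apply, Matrix.smul_apply, smul_eq_mul, wedge, Matrix.sub_apply]
    field_simp
    ring

/-- Every pair of a positive definite and a skew-symmetric matrix is realizable with zero column
sum. -/
lemma Reach.of_posDef {d : ℕ} {X Y : Matrix (Fin d) (Fin d) ℝ} (hX : X.PosDef) (hY : Yᵀ = -Y) :
    Reach 0 X Y := by
  rcases Nat.eq_zero_or_pos d with rfl | hd
  · convert Reach.zero
    · ext i; exact i.elim0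
    · ext i; exact i.elim0
  obtain ⟨B, hB, hXB⟩ : ∃ B : Matrix (Fin d) (Fin d) ℝ, IsUnit B ∧ X = Bᵀ * B := by
    open scoped MatrixOrder in
    obtain ⟨B, hB, hXB⟩ :=
      CStarAlgebra.isStrictlyPositive_iff_eq_star_mul_self.mp hX.isStrictlyPositive
    exact ⟨B, hB, by simpa [star_eq_conjTranspose] using hXB⟩
  have hdet : IsUnit B.det := (isUnit_iff_isUnit_det B).mp hB
  set K : Matrix (Fin d) (Fin d) ℝ := B⁻¹ᵀ * Y * B⁻¹ with hK
  have hYK : Y = Bᵀ * K * B := by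
    have h1 : Bᵀ * B⁻¹ᵀ = 1 := by rw [← transpose_mul, nonsing_inv_mul B hdet, transpose_one]
    calc Y = (Bᵀ * B⁻¹ᵀ) * Y * (B⁻¹ * B) := by rw [h1, nonsing_inv_mul B hdet]; simp
      _ = Bᵀ * K * B := by simp only [hK, Matrix.mul_assoc]
  have hKskew : Kᵀ = -K := by
    simp [hK, hY, Matrix.mul_assoc]
  have hd' : (d : ℝ) ≠ 0 := by positivity
  -- each diagonal term `BᵢBᵢᵀ` occurs `2d` times and each `Kᵢⱼ BᵢBⱼᵀ` twice in the double sum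
  have key := (Reach.sum Finset.univ _ _ fun p : Fin d × Fin d =>
    Reach.pair (B p.1) (B p.2) (d * K p.1 p.2)).smul (r := (2 * d : ℝ)⁻¹) (by positivity)
  convert key using 1
  · ext a b
    simp only [hXB, Fintype.sum_prod_type, Matrix.smul_apply, Matrix.sum_apply, Matrix.add_apply, vecMulVec_apply,
      smul_eq_mul, Finset.sum_add_distrib, Finset.sum_const, Finset.card_univ, Fintype.card_fin,
      mul_apply, transpose_apply, ← Finset.smul_sum]
    simp only [nsmul_eq_mul]
    field_simp
    ring
  · have hs (i j : Fin d) : K j i = -K i j := congrFun (congrFun hKskew i) j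
    have h1 (a b : Fin d) : ∑ i, ∑ j, K i j * (B i a * B j b) = Y a b := by
      rw [hYK, Finset.sum_comm]
      simp only [mul_apply, transpose_apply, Finset.sum_mul]
      exact Finset.sum_congr rfl fun i _ => Finset.sum_congr rfl fun j _ => by ring
    have h2 (a b : Fin d) : ∑ i, ∑ j, K i j * (B j a * B i b) = -Y a b := by
      rw [← h1, Finset.sum_comm, ← Finset.sum_neg_distrib]
      refine Finset.sum_congr rfl fun i _ => ?_
      rw [← Finset.sum_neg_distrib]
      exact Finset.sum_congr rfl fun j _ => by rw [hs]; ring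
    ext a b
    simp only [Fintype.sum_prod_type, Matrix.smul_apply, Matrix.sum_apply, wedge, Matrix.sub_apply, vecMulVec_apply,
      smul_eq_mul, mul_assoc, ← Finset.mul_sum, mul_sub, Finset.sum_sub_distrib, h1, h2]
    field_simp
    ring

/-- The nonzero block of `P` in terms of `I`, `𝟙𝟙ᵀ` and `A`. -/
lemma Pmat_castSucc {N : ℕ} (α₁ α₂ : ℝ) (k l : Fin N) :
    Pmat (N + 1) α₁ α₂ k.castSucc l.castSucc =
      ((2 * α₂ - (α₁ + α₂) ^ 2) / 2) * ((1 : Matrix (Fin N) (Fin N) ℝ) k l + 1)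
        - ((α₁ + α₂) ^ 2 / 2) * Amat N k l := by
  have hk := k.isLt.ne
  have hl := l.isLt.ne
  rcases lt_trichotomy k l with h | h | h
  · have h' : (k : ℕ) < l := h
    simp [Pmat, Amat, one_apply, h.ne, h, hk, hl, h'.ne]; ring
  · subst h
    simp [Pmat, Amat, hk]; ring
  · have h' : (l : ℕ) < k := h
    simp [Pmat, Amat, one_apply, h.ne', h, hk, hl, h'.ne', h.not_gt]; ring

/-- Appending a zero column to `U` with `U𝟙 = 0` turns `P` into the form
`(c₁/2) I - ((α₁+α₂)²/2) A`. -/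
lemma mul_Pmat_mul {d N : ℕ} (α₁ α₂ : ℝ) (U : Matrix (Fin d) (Fin N) ℝ)
    (hU : U *ᵥ (fun _ => 1) = 0) :
    (of fun i => Fin.snoc (U i) 0 : Matrix (Fin d) (Fin (N + 1)) ℝ) * Pmat (N + 1) α₁ α₂ *
        (of fun i => Fin.snoc (U i) 0 : Matrix (Fin d) (Fin (N + 1)) ℝ)ᵀ =
      ((2 * α₂ - (α₁ + α₂) ^ 2) / 2) • (U * Uᵀ) - ((α₁ + α₂) ^ 2 / 2) • (U * Amat N * Uᵀ) := by
  have hU' (i : Fin d) : ∑ k, U i k = 0 := by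
    simpa [mulVec, dotProduct] using congrFun hU i
  have hJ : U * (of fun _ _ => 1 : Matrix (Fin N) (Fin N) ℝ) = 0 := by
    ext i j; simp [mul_apply, hU']
  have hblock : (Pmat (N + 1) α₁ α₂).submatrix Fin.castSucc Fin.castSucc =
      ((2 * α₂ - (α₁ + α₂) ^ 2) / 2) • (1 + (of fun _ _ => 1 : Matrix (Fin N) (Fin N) ℝ))
        - ((α₁ + α₂) ^ 2 / 2) • Amat N := by
    ext k l
    simp only [submatrix_apply, Pmat_castSucc, Matrix.sub_apply, Matrix.smul_apply, Matrix.add_apply, of_apply,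
      smul_eq_mul]
  calc _ = U * (Pmat (N + 1) α₁ α₂).submatrix Fin.castSucc Fin.castSucc * Uᵀ := by
        ext i j
        simp [mul_apply, Fin.sum_univ_castSucc]
    _ = _ := by
        rw [hblock, Matrix.mul_sub, Matrix.mul_smul, Matrix.mul_add, hJ, Matrix.mul_smul]
        simp [Matrix.sub_mul]

/-- Theorem 3, normal case: let `2α₂ − (α₁+α₂)² ≠ 0`, `T_d` normal with
`(2α₂ − (α₁+α₂)²)(T_d + T_dᵀ)` positive definite, and assume the interlacing property
`ω_k^{m+1} > ω_k^m > ω_{k+1}^{m+1} ≥ 0` (for `k = 1,…,⌊m/2⌋`) of the sorted imaginary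
parts of the eigenvalues of `C(m)`.  Then there exist `m ≥ rk(T_d)+1` and
`W ∈ ℝ^{2n×m}` with `W P Wᵀ = T_d` and `W𝟙 = 0`. -/
theorem stmt4 {n : ℕ} (α₁ α₂ : ℝ) (hα : α₁ + α₂ ≠ 0)
    (hparam : 2 * α₂ - (α₁ + α₂) ^ 2 ≠ 0)
    (Td : Matrix (Fin (2 * n)) (Fin (2 * n)) ℝ)
    (hnormal : Td * Tdᵀ = Tdᵀ * Td)
    (hposdef : (((2 * α₂ - (α₁ + α₂) ^ 2) • (Td + Tdᵀ)) : Matrix (Fin (2*n)) (Fin (2*n)) ℝ).PosDef)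
    (ω : ℕ → ℕ → ℝ) (hω : IsSortedImagEigenvalues ω)
    (hinterlace : ∀ m : ℕ, 2 ≤ m → ∀ k : ℕ, 1 ≤ k → k ≤ m / 2 →
      ω (m + 1) k > ω m k ∧ ω m k > ω (m + 1) (k + 1) ∧ 0 ≤ ω (m + 1) (k + 1)) :
    ∃ m : ℕ, Td.rank + 1 ≤ m ∧
      ∃ W : Matrix (Fin (2 * n)) (Fin m) ℝ,
        W * Pmat m α₁ α₂ * Wᵀ = Td ∧ W.mulVec (fun _ => 1) = 0 := by
  have hs : (α₁ + α₂) ^ 2 ≠ 0 := pow_ne_zero 2 hα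
  set c₁ := 2 * α₂ - (α₁ + α₂) ^ 2 with hc
  have hX : (c₁⁻¹ • (Td + Tdᵀ)).PosDef := by
    have h := hposdef.smul (show (0 : ℝ) < (c₁ ^ 2)⁻¹ by positivity)
    rw [smul_smul] at h
    convert h using 2
    field_simp
  have hY : ((-((α₁ + α₂) ^ 2)⁻¹) • (Td - Tdᵀ))ᵀ = -((-((α₁ + α₂) ^ 2)⁻¹) • (Td - Tdᵀ)) := by
    simp only [transpose_smul, transpose_sub, transpose_transpose]
    module
  obtain ⟨N, U, hU, hUX, hUY⟩ := Reach.of_posDef hX hY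
  have hW := mul_Pmat_mul α₁ α₂ U hU
  have hT : (c₁ / 2) • (U * Uᵀ) - ((α₁ + α₂) ^ 2 / 2) • (U * Amat N * Uᵀ) = Td := by
    rw [hUX, hUY]
    ext i j
    simp only [Matrix.sub_apply, Matrix.smul_apply, Matrix.add_apply, smul_eq_mul]
    field_simp
    ring
  refine ⟨N + 1, ?_, of fun i => Fin.snoc (U i) 0, hW.trans hT, ?_⟩
  · -- `Td = U * (⋯)`, and `U` has `N` columns
    have hfac : Td = U * ((c₁ / 2) • Uᵀ - ((α₁ + α₂) ^ 2 / 2) • (Amat N * Uᵀ)) := by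
      rw [Matrix.mul_sub, Matrix.mul_smul, Matrix.mul_smul, ← Matrix.mul_assoc, hT]
    have h1 : Td.rank ≤ U.rank := by
      conv_lhs => rw [hfac]
      exact rank_mul_le_left _ _
    have h2 := U.rank_le_width
    omega
  · ext i
    have h := congrFun hU i
    simp only [mulVec, dotProduct, mul_one, Pi.zero_apply] at h
    simp [mulVec, dotProduct, Fin.sum_univ_castSucc, h]
end

section
/- Let f : ℝ → ℝ be continuously differentiable with f(z) ≠ 0 for all z, let F : ℝ → ℝ be differentiable with F′(z) = 1/f(z)² for all z, and set g(z) := −f(z)·F(z). Then for all z ∈ ℝ, g′(z)f(z) − f′(z)g(z) = −1; consequently, the gradient-generating equation holds with T_d = [[0, −I],[I, 0]] (n×n blocks), i.e. for all z ∈ ℝ: f′(z)f(z)·0 + f′(z)g(z)·(−I) + g′(z)f(z)·I + g′(z)g(z)·0 = −I. -/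
/-!
The product rule gives `g' = -(f' F + f · f⁻²)`, so in `g' f - f' g` the terms `f' f F` cancel and
`-f² · f⁻² = -1` remains, `f` being nowhere zero. For the given blocks, the left side of the
gradient-generating equation is this scalar times the identity matrix.
-/

/-- generating functions for `T_d = [[0, −I],[I, 0]]`:
if `F` is an antiderivative of `1/f²` and `g = −f·F`, then `g'f − f'g = −1`, and hence
the gradient-generating equation `f'f·0 + f'g·(−I) + g'f·I + g'g·0 = −I` holds. -/
theorem stmt5 {n : ℕ} (f : ℝ → ℝ) (hf : ContDiff ℝ 1 f) (hf0 : ∀ z : ℝ, f z ≠ 0)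
    (F : ℝ → ℝ) (hF : ∀ z : ℝ, HasDerivAt F (1 / (f z) ^ 2) z)
    (g : ℝ → ℝ) (hg : ∀ z : ℝ, g z = -(f z * F z)) :
    (∀ z : ℝ, deriv g z * f z - deriv f z * g z = -1) ∧
    (∀ z : ℝ,
      (deriv f z * f z) • (0 : Matrix (Fin n) (Fin n) ℝ)
        + (deriv f z * g z) • (-(1 : Matrix (Fin n) (Fin n) ℝ))
        + (deriv g z * f z) • (1 : Matrix (Fin n) (Fin n) ℝ)
        + (deriv g z * g z) • (0 : Matrix (Fin n) (Fin n) ℝ)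
        = -(1 : Matrix (Fin n) (Fin n) ℝ)) := by
  have key : ∀ z : ℝ, deriv g z * f z - deriv f z * g z = -1 := by
    intro z
    have hfz : HasDerivAt f (deriv f z) z :=
      (hf.differentiable one_ne_zero z).hasDerivAt
    have hgz : HasDerivAt g (-(deriv f z * F z + f z * (1 / (f z) ^ 2))) z := by
      rw [show g = fun z => -(f z * F z) from funext hg]
      exact (hfz.mul (hF z)).neg
    have h0 := hf0 z
    -- The two terms `f' f F` cancel, leaving `-f² · (1 / f²)`.
    rw [hgz.deriv, hg z]
    field_simp
    ring
  refine ⟨key, fun z => ?_⟩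
  -- Both nonzero blocks are multiples of the identity, with total coefficient `g'f - f'g`.
  calc
    _ = (deriv g z * f z - deriv f z * g z) • (1 : Matrix (Fin n) (Fin n) ℝ) := by
      module
    _ = -1 := by rw [key z, neg_one_smul]
end

section
/- Let a, b > 0, φ ∈ ℝ, and let Q ∈ ℝ^{n×n} be skew-symmetric. Define f(z) := a^{−1/2}·sin(√(ab)·z + φ) and g(z) := b^{−1/2}·cos(√(ab)·z + φ), and T_d := [[aQ, −I],[I, bQ]]. Then the gradient-generating equation holds: for all z ∈ ℝ, f′(z)f(z)·aQ + f′(z)g(z)·(−I) + g′(z)f(z)·I + g′(z)g(z)·bQ = −I. -/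
/-! With `θ = √(ab) z + φ` one has `f' = √b cos θ` and `g' = -√a sin θ`. Hence
`f' g = cos² θ` and `g' f = -sin² θ`, so the two identity blocks add up to
`-(cos² θ + sin² θ) I = -I`, while `a f' f = √a √b sin θ cos θ = -b g' g`, so the `Q` terms
cancel. -/

open Matrix

/-- `f(z) = a^{−1/2} sin(√(ab)·z + φ)`. -/
noncomputable def fGen (a b φ : ℝ) : ℝ → ℝ :=
  fun z => (Real.sqrt a)⁻¹ * Real.sin (Real.sqrt (a * b) * z + φ)

/-- `g(z) = b^{−1/2} cos(√(ab)·z + φ)`. -/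
noncomputable def gGen (a b φ : ℝ) : ℝ → ℝ :=
  fun z => (Real.sqrt b)⁻¹ * Real.cos (Real.sqrt (a * b) * z + φ)

theorem deriv_fGen (a b φ z : ℝ) (ha : 0 < a) :
    deriv (fGen a b φ) z = √b * Real.cos (√(a * b) * z + φ) := by
  have h : HasDerivAt (fGen a b φ)
      ((√a)⁻¹ * (Real.cos (√(a * b) * z + φ) * (√(a * b) * 1))) z :=
    ((((hasDerivAt_id z).const_mul _).add_const φ).sin).const_mul _
  have hs : √a ≠ 0 := (Real.sqrt_pos.mpr ha).ne'
  rw [h.deriv, Real.sqrt_mul ha.le]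
  field_simp

theorem deriv_gGen (a b φ z : ℝ) (ha : 0 < a) (hb : 0 < b) :
    deriv (gGen a b φ) z = -(√a * Real.sin (√(a * b) * z + φ)) := by
  have h : HasDerivAt (gGen a b φ)
      ((√b)⁻¹ * (-Real.sin (√(a * b) * z + φ) * (√(a * b) * 1))) z :=
    ((((hasDerivAt_id z).const_mul _).add_const φ).cos).const_mul _
  have hs : √b ≠ 0 := (Real.sqrt_pos.mpr hb).ne'
  rw [h.deriv, Real.sqrt_mul ha.le]
  field_simp

/-- generating functions for `T_d = [[aQ, −I],[I, bQ]]` with `Q` skew: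
the gradient-generating equation `f'f·(aQ) + f'g·(−I) + g'f·I + g'g·(bQ) = −I` holds. -/
theorem stmt6 {n : ℕ} (a b φ : ℝ) (ha : 0 < a) (hb : 0 < b)
    (Q : Matrix (Fin n) (Fin n) ℝ) (hQ : Qᵀ = -Q) :
    ∀ z : ℝ,
      (deriv (fGen a b φ) z * fGen a b φ z) • (a • Q)
        + (deriv (fGen a b φ) z * gGen a b φ z) • (-(1 : Matrix (Fin n) (Fin n) ℝ))
        + (deriv (gGen a b φ) z * fGen a b φ z) • (1 : Matrix (Fin n) (Fin n) ℝ)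
        + (deriv (gGen a b φ) z * gGen a b φ z) • (b • Q)
        = -(1 : Matrix (Fin n) (Fin n) ℝ) := by
  intro z
  have hsa : √a ≠ 0 := (Real.sqrt_pos.mpr ha).ne'
  have hsb : √b ≠ 0 := (Real.sqrt_pos.mpr hb).ne'
  rw [deriv_fGen a b φ z ha, deriv_gGen a b φ z ha hb]
  simp only [fGen, gGen]
  set θ := √(a * b) * z + φ
  have h₁ : √b * Real.cos θ * ((√a)⁻¹ * Real.sin θ) * a
      + -(√a * Real.sin θ) * ((√b)⁻¹ * Real.cos θ) * b = 0 := by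
    have hqa : (√a)⁻¹ * a = √a := by rw [inv_mul_eq_div, Real.div_sqrt]
    have hqb : (√b)⁻¹ * b = √b := by rw [inv_mul_eq_div, Real.div_sqrt]
    linear_combination √b * Real.cos θ * Real.sin θ * hqa - √a * Real.sin θ * Real.cos θ * hqb
  have h₂ : √b * Real.cos θ * ((√b)⁻¹ * Real.cos θ) = Real.cos θ ^ 2 := by
    field_simp
  have h₃ : -(√a * Real.sin θ) * ((√a)⁻¹ * Real.sin θ) = -Real.sin θ ^ 2 := by
    field_simp
  rw [h₂, h₃]
  linear_combination (norm := module) h₁ • Q - Real.sin_sq_add_cos_sq θ • (1 : Matrix (Fin n) (Fin n) ℝ)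
end

section
/- Let α₁, α₂ ∈ ℝ, let T_d ∈ ℝ^{2n×2n} be a block matrix [[T₁₁, T₂₁],[T₂₁, T₂₂]] whose lower-left n×n block T₂₁ is invertible, and suppose W ∈ ℝ^{2n×m} satisfies W·𝟙 = 0 and W·P·Wᵀ = T_d, where P ∈ ℝ^{m×m} is the matrix whose last row and last column are zero and whose upper-left (m−1)×(m−1) block has every diagonal entry equal to c₁ = 2α₂ − (α₁+α₂)², every entry strictly above the diagonal equal to c₂ = α₂ − (α₁+α₂)², and every entry strictly below the diagonal equal to α₂. Then m ≥ n + 1. (Consequently, since every matrix T_d listed in Theorems 4 and 5 has lower-left block I, I − Q, or I − cQ with Q skew-symmetric, the minimal number of steps of the gradient-approximation scheme is m = n + 1.) -/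
/-!
Let `L` be the lower half of `W`. Reading off the lower-left block of `W P Wᵀ` gives
`T₂₁ = L * (P * Uᵀ)`, with `U` the upper half of `W`, so invertibility of `T₂₁` makes `L` an
`n × m` matrix with a right inverse, whence `n ≤ m`. If `n = m`, then `L` would be invertible,
whereas `L` annihilates the all-ones vector, which is nonzero because `n ≥ 1`. The particular
entries of `P` play no role.
-/

open Matrix

/-- A matrix over `ℝ` with a right inverse and a nonzero kernel vector (here the all-ones vector)
is strictly wider than tall: a square one would be invertible. -/
theorem lt_of_mul_eq_one_of_mulVec_eq_zero {n m : ℕ} (hn : 1 ≤ n)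
    (L : Matrix (Fin n) (Fin m) ℝ) (X : Matrix (Fin m) (Fin n) ℝ) (h : L * X = 1)
    (hL : L *ᵥ (fun _ => 1) = 0) : n < m := by
  have hle : n ≤ m := by
    have h1 := Matrix.rank_mul_le_left L X
    rw [h, Matrix.rank_one, Fintype.card_fin] at h1
    exact h1.trans L.rank_le_width
  refine lt_of_le_of_ne hle ?_
  rintro rfl
  have h2 : X * L = 1 := mul_eq_one_comm.mp h
  have h3 : (fun _ => 1 : Fin n → ℝ) = 0 := by
    rw [← Matrix.one_mulVec (fun _ => 1 : Fin n → ℝ), ← h2, ← Matrix.mulVec_mulVec, hL,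
      Matrix.mulVec_zero]
  exact one_ne_zero (congrFun h3 ⟨0, hn⟩)

/-- Corollary: minimal number of steps: if the lower-left `n×n` block of
`T_d` is invertible and `W ∈ ℝ^{2n×m}` satisfies `W𝟙 = 0` and `W P Wᵀ = T_d`, then
`m ≥ n + 1`. -/
theorem stmt13 {n m : ℕ} (hn : 1 ≤ n) (α₁ α₂ : ℝ)
    (T₁₁ T₁₂ T₂₁ T₂₂ : Matrix (Fin n) (Fin n) ℝ) (hT₂₁ : IsUnit T₂₁)
    (W : Matrix (Fin n ⊕ Fin n) (Fin m) ℝ)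
    (hsum : W.mulVec (fun _ => 1) = 0)
    (hWP : W * Pmat m α₁ α₂ * Wᵀ = Matrix.fromBlocks T₁₁ T₁₂ T₂₁ T₂₂) :
    n + 1 ≤ m := by
  have hblock : W.toRows₂ * (Pmat m α₁ α₂ * W.toRows₁ᵀ) = T₂₁ := by
    rw [← Matrix.mul_assoc]
    ext i j
    exact congrFun (congrFun hWP (Sum.inr i)) (Sum.inl j)
  refine lt_of_mul_eq_one_of_mulVec_eq_zero hn W.toRows₂
    (Pmat m α₁ α₂ * W.toRows₁ᵀ * T₂₁⁻¹) ?_ ?_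
  · rw [← Matrix.mul_assoc, hblock]
    exact Matrix.mul_nonsing_inv _ ((Matrix.isUnit_iff_isUnit_det _).mp hT₂₁)
  · ext i
    exact congrFun hsum (Sum.inr i)
end

section
/- Let p, r ∈ ℕ with p ≥ 2r, and let C ∈ ℝ^{p×p} be skew-symmetric with eigenvalues ±η_ℓ·i (η_ℓ ∈ ℝ, η_ℓ ≥ 0, ℓ = 1,…,⌈p/2⌉, counted with multiplicity), arranged so that η₁ ≥ η₂ ≥ … ≥ η_{⌈p/2⌉} ≥ 0. Let ω₁ ≥ ω₂ ≥ … ≥ ω_r ≥ 0 be real numbers satisfying η_k ≥ ω_k ≥ η_{⌈p/2⌉ − r + k} for k = 1,…,r. Then there exists an orthogonal matrix Θ ∈ ℝ^{p×p} such that the leading 2r×2r principal submatrix of ΘᵀCΘ is a skew-symmetric matrix whose eigenvalues are exactly ±ω_ℓ·i, ℓ = 1,…,r. -/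
/-!
The key tool is that a real skew-symmetric matrix is determined up to orthogonal similarity by its
characteristic polynomial (`orthSim_of_charpoly_eq`): an eigenvalue `i θ` common to two such
matrices splits off the same block (a zero, or a `2 × 2` rotation generator) from both, and the
complements still share their characteristic polynomial. Hence `C` may be replaced by any skew
matrix with the same characteristic polynomial, and it suffices to construct, for suitable `ω`, one
whose compression has the spectrum `± i ω`.

For a gap of one, `η₀ ≥ ω₀ ≥ η₁ ≥ ω₁ ≥ …`, take `[[0, A], [-Aᵀ, 0]]`, where `A` is the rectangular
diagonal matrix of the `ω k` with a last row `v` appended. Its characteristic polynomial is, up to a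
power of `x`, `det (x² + AᵀA)`, and `AᵀA` is the rank-one perturbation `diag (ω²) + v vᵀ`. The matrix
determinant lemma turns the requirement on `v` into the partial fraction identity
`∏ (t + η k²) = ∏ (t + ω k²) * (1 + ∑ v k² / (t + ω k²))`, which has a solution with nonnegative
`v k²` because the sequences interlace (`exists_residues`). Discarding the appended row, and the
last column when `A` is square, leaves the diagonal `ω` block (`exists_bordered`).

A gap of `m - r` is bridged by `m - r` such steps, the first one going from `η` to
`τ k = max (ω k) (η (k + 1))` for `k < r` and `τ k = η (k + 1)` for the remaining `k`
(`exists_compression`). The orthonormal columns obtained in this way are completed to an orthogonal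
matrix. A one-dimensional kernel in odd dimension is accounted for by letting `A` have one row more
than columns. Inside the proof the sequences are indexed from `0`.
-/

open Matrix Polynomial

/-! ### Orthogonal similarity and invariant subspaces -/

/-- Orthogonal similarity of real square matrices over possibly different index types. -/
def OrthSim {ι κ : Type} [Fintype ι] [Fintype κ] [DecidableEq ι] [DecidableEq κ]
    (A : Matrix ι ι ℝ) (B : Matrix κ κ ℝ) : Prop :=
  ∃ V : Matrix ι κ ℝ, Vᵀ * V = 1 ∧ V * Vᵀ = 1 ∧ Vᵀ * A * V = B

section
variable {ι κ ρ : Type} [Fintype ι] [Fintype κ] [Fintype ρ]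
  [DecidableEq ι] [DecidableEq κ] [DecidableEq ρ]

theorem OrthSim.symm {A : Matrix ι ι ℝ} {B : Matrix κ κ ℝ} (h : OrthSim A B) : OrthSim B A := by
  obtain ⟨V, h1, h2, rfl⟩ := h
  refine ⟨Vᵀ, by simpa using h2, by simpa using h1, ?_⟩
  calc Vᵀᵀ * (Vᵀ * A * V) * Vᵀ = (V * Vᵀ) * A * (V * Vᵀ) := by
        simp only [transpose_transpose, Matrix.mul_assoc]
    _ = A := by simp [h2]

theorem OrthSim.trans {A : Matrix ι ι ℝ} {B : Matrix κ κ ℝ} {D : Matrix ρ ρ ℝ}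
    (h : OrthSim A B) (h' : OrthSim B D) : OrthSim A D := by
  obtain ⟨V, h1, h2, rfl⟩ := h
  obtain ⟨W, h3, h4, rfl⟩ := h'
  refine ⟨V * W, ?_, ?_, ?_⟩
  · calc (V * W)ᵀ * (V * W) = Wᵀ * (Vᵀ * V) * W := by
          simp only [transpose_mul, Matrix.mul_assoc]
      _ = 1 := by simp [h1, h3]
  · calc (V * W) * (V * W)ᵀ = V * (W * Wᵀ) * Vᵀ := by
          simp only [transpose_mul, Matrix.mul_assoc]
      _ = 1 := by simp [h2, h4]
  · simp only [transpose_mul, Matrix.mul_assoc]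

theorem OrthSim.charpoly_eq {A : Matrix ι ι ℝ} {B : Matrix κ κ ℝ} (h : OrthSim A B) :
    A.charpoly = B.charpoly := by
  obtain ⟨V, h1, h2, rfl⟩ := h
  have hc : Fintype.card ι = Fintype.card κ := Matrix.square_of_invertible V Vᵀ h2 h1
  have := charpoly_mul_comm' (Vᵀ * A) V
  rw [hc, (isRegular_X_pow _).left.eq_iff] at this
  rw [this, ← Matrix.mul_assoc, h2, Matrix.one_mul]

theorem OrthSim.fromBlocks (S : Matrix κ κ ℝ) {A : Matrix ι ι ℝ} {B : Matrix ρ ρ ℝ}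
    (h : OrthSim A B) : OrthSim (fromBlocks S 0 0 A) (fromBlocks S 0 0 B) := by
  obtain ⟨V, h1, h2, rfl⟩ := h
  refine ⟨Matrix.fromBlocks 1 0 0 V, ?_, ?_, ?_⟩ <;>
    simp [fromBlocks_transpose, fromBlocks_multiply, h1, h2]

/-- A matrix with orthonormal columns extends to an orthogonal matrix. -/
theorem exists_extension (W : Matrix ι κ ℝ) (hW : Wᵀ * W = 1)
    (hc : Fintype.card ι = Fintype.card κ + Fintype.card ρ) :
    ∃ U : Matrix ι ρ ℝ, (fromCols W U)ᵀ * fromCols W U = 1 ∧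
      fromCols W U * (fromCols W U)ᵀ = 1 := by
  let v : κ ⊕ ρ → EuclideanSpace ℝ ι := Sum.elim (fun k => WithLp.toLp 2 (fun i => W i k)) 0
  have hv : Orthonormal ℝ ((Set.range (Sum.inl : κ → κ ⊕ ρ)).domRestrict v) := by
    rw [orthonormal_iff_ite]
    rintro ⟨_, i, rfl⟩ ⟨_, j, rfl⟩
    have := congrFun (congrFun hW i) j
    simp only [mul_apply, transpose_apply, one_apply] at this
    simp [v, PiLp.inner_apply, Subtype.ext_iff, ← this, mul_comm]
  obtain ⟨b, hb⟩ := hv.exists_orthonormalBasis_extension_of_card_eq (by simp [hc])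
  have key : (fromCols W (Matrix.of fun i k => b (Sum.inr k) i)) =
      Matrix.of fun i k => b k i := by
    ext i k
    rcases k with k | k
    · have := hb (Sum.inl k) ⟨k, rfl⟩
      simp [this, v]
    · simp
  have h1 : (Matrix.of fun i k => b k i)ᵀ * (Matrix.of fun i k => b k i) = 1 := by
    ext i j
    have := orthonormal_iff_ite.1 b.orthonormal i j
    simp only [mul_apply, transpose_apply, one_apply, ← this]
    simp [PiLp.inner_apply, mul_comm]
  refine ⟨Matrix.of fun i k => b (Sum.inr k) i, ?_, ?_⟩
  · rw [key, h1]
  · rw [key]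
    exact (mul_eq_one_comm_of_card_eq ι (κ ⊕ ρ) ℝ (by simp [hc])).2 h1

/-- An invariant subspace of a skew-symmetric matrix splits off orthogonally. -/
theorem peel {A : Matrix ι ι ℝ} (hA : Aᵀ = -A) (W : Matrix ι κ ℝ) (S : Matrix κ κ ℝ)
    (hW : Wᵀ * W = 1) (hAW : A * W = W * S)
    (hc : Fintype.card ι = Fintype.card κ + Fintype.card ρ) :
    ∃ A' : Matrix ρ ρ ℝ, A'ᵀ = -A' ∧ OrthSim A (fromBlocks S 0 0 A') := by
  obtain ⟨U, h1, h2⟩ := exists_extension (ρ := ρ) W hW hc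
  have h1' := h1
  rw [transpose_fromCols, fromRows_mul_fromCols, ← fromBlocks_one, fromBlocks_inj] at h1'
  obtain ⟨-, hWU, hUW, -⟩ := h1'
  have hS : Wᵀ * A * W = S := by rw [Matrix.mul_assoc, hAW, ← Matrix.mul_assoc, hW, Matrix.one_mul]
  have h21 : Uᵀ * A * W = 0 := by
    rw [Matrix.mul_assoc, hAW, ← Matrix.mul_assoc, hUW, Matrix.zero_mul]
  have h12 : Wᵀ * A * U = 0 := by
    have := congrArg transpose h21
    simpa [hA, Matrix.mul_assoc] using this
  refine ⟨Uᵀ * A * U, by simp [hA, Matrix.mul_assoc], fromCols W U, h1, h2, ?_⟩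
  rw [transpose_fromCols, fromRows_mul, fromRows_mul_fromCols, hS, h21, h12]

/-! ### Classification of skew-symmetric matrices -/

/-- A complex eigenvalue of a real skew-symmetric matrix is purely imaginary; the real and
imaginary parts of an eigenvector span an invariant subspace. -/
theorem exists_eigenpair {A : Matrix ι ι ℝ} (hA : Aᵀ = -A) {z : ℂ}
    (hz : (A.charpoly.map Complex.ofRealHom).eval z = 0) :
    z.re = 0 ∧ ∃ a b : ι → ℝ, (a ≠ 0 ∨ b ≠ 0) ∧ A *ᵥ a = -(z.im • b) ∧ A *ᵥ b = z.im • a ∧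
      z.im * (a ⬝ᵥ b) = 0 ∧ z.im * (a ⬝ᵥ a) = z.im * (b ⬝ᵥ b) := by
  rw [← charpoly_map, eval_charpoly, ← exists_mulVec_eq_zero_iff] at hz
  obtain ⟨w, hw0, hw⟩ := hz
  rw [Matrix.sub_mulVec, sub_eq_zero] at hw
  have hw' : ∀ i, z * w i = ∑ j, (A i j : ℂ) * w j := by
    intro i
    have := congrFun hw i
    simpa [scalar_apply, mulVec_diagonal, mulVec, dotProduct, diagonal_apply] using this
  have ha : A *ᵥ (fun i => (w i).re) = z.re • (fun i => (w i).re) - z.im • (fun i => (w i).im) := by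
    ext i
    have := congrArg Complex.re (hw' i)
    simpa [mulVec, dotProduct] using this.symm
  have hb : A *ᵥ (fun i => (w i).im) = z.re • (fun i => (w i).im) + z.im • (fun i => (w i).re) := by
    ext i
    have := congrArg Complex.im (hw' i)
    simpa [mulVec, dotProduct] using this.symm
  have hne : (fun i => (w i).re) ≠ 0 ∨ (fun i => (w i).im) ≠ 0 := by
    by_contra! h
    apply hw0
    ext i
    exact Complex.ext (congrFun h.1 i) (congrFun h.2 i)
  generalize (fun i => (w i).re) = a at *
  generalize (fun i => (w i).im) = b at *
  have skew : ∀ x y : ι → ℝ, x ⬝ᵥ A *ᵥ y = -(y ⬝ᵥ A *ᵥ x) := by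
    intro x y
    rw [dotProduct_mulVec, ← mulVec_transpose, hA, neg_mulVec, neg_dotProduct, dotProduct_comm]
  have haa := skew a a
  have hbb := skew b b
  have hab := skew a b
  rw [ha, hb] at hab
  rw [ha] at haa
  rw [hb] at hbb
  simp only [dotProduct_add, dotProduct_sub, dotProduct_smul, smul_eq_mul,
    dotProduct_comm b a] at haa hbb hab
  have hpos : 0 < a ⬝ᵥ a + b ⬝ᵥ b := by
    have h1 : 0 ≤ a ⬝ᵥ a := by simpa using dotProduct_star_self_nonneg a
    have h2 : 0 ≤ b ⬝ᵥ b := by simpa using dotProduct_star_self_nonneg b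
    rcases hne with h | h
    · have : a ⬝ᵥ a ≠ 0 := by simpa using h
      positivity
    · have : b ⬝ᵥ b ≠ 0 := by simpa using h
      positivity
  have hre : z.re = 0 := by
    have : z.re * (a ⬝ᵥ a + b ⬝ᵥ b) = 0 := by linarith
    exact (mul_eq_zero.1 this).resolve_right hpos.ne'
  rw [hre] at ha hb haa hab
  refine ⟨hre, a, b, hne, by simpa using ha, by simpa using hb, by linarith, by linarith⟩

/-- A kernel vector splits off a zero from a skew-symmetric matrix. -/
theorem peel_zero {A : Matrix ι ι ℝ} (hA : Aᵀ = -A)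
    (hz : (A.charpoly.map Complex.ofRealHom).eval 0 = 0)
    (hc : Fintype.card ι = 1 + Fintype.card ρ) :
    ∃ A' : Matrix ρ ρ ℝ, A'ᵀ = -A' ∧
      OrthSim A (fromBlocks (0 : Matrix Unit Unit ℝ) 0 0 A') := by
  obtain ⟨-, a, b, hne, ha, hb, -⟩ := exists_eigenpair hA hz
  have : ∃ u : ι → ℝ, u ≠ 0 ∧ A *ᵥ u = 0 := by
    rcases hne with h | h
    · exact ⟨a, h, by simpa using ha⟩
    · exact ⟨b, h, by simpa using hb⟩
  obtain ⟨u, hu, hAu⟩ := this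
  have hpos : 0 < u ⬝ᵥ u := by
    have h1 : 0 ≤ u ⬝ᵥ u := by simpa using dotProduct_star_self_nonneg u
    exact h1.lt_of_ne' (by simpa using hu)
  refine peel hA (replicateCol Unit ((√(u ⬝ᵥ u))⁻¹ • u)) 0 ?_ ?_ (by simpa using hc)
  · ext i j
    have : (√(u ⬝ᵥ u))⁻¹ * ((√(u ⬝ᵥ u))⁻¹ * (u ⬝ᵥ u)) = 1 := by
      rw [← mul_assoc, ← mul_inv, Real.mul_self_sqrt hpos.le, inv_mul_cancel₀ hpos.ne']
    rw [transpose_replicateCol, replicateRow_mul_replicateCol_apply, smul_dotProduct,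
      dotProduct_smul, smul_eq_mul, smul_eq_mul, this, one_apply, if_pos rfl]
  · rw [← replicateCol_mulVec, mulVec_smul, hAu]
    ext; simp

/-- A nonzero eigenvalue splits off a `2 × 2` block from a skew-symmetric matrix: the real and
imaginary parts of an eigenvector are orthogonal and of equal length. -/
theorem peel_pair {A : Matrix ι ι ℝ} (hA : Aᵀ = -A) {z : ℂ} (hz0 : z.im ≠ 0)
    (hz : (A.charpoly.map Complex.ofRealHom).eval z = 0)
    (hc : Fintype.card ι = 2 + Fintype.card ρ) :
    ∃ A' : Matrix ρ ρ ℝ, A'ᵀ = -A' ∧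
      OrthSim A (fromBlocks !![0, z.im; -z.im, 0] 0 0 A') := by
  obtain ⟨-, a, b, hne, ha, hb, hab, haabb⟩ := exists_eigenpair hA hz
  replace hab := (mul_eq_zero.1 hab).resolve_left hz0
  replace haabb := mul_left_cancel₀ hz0 haabb
  have hpos : 0 < a ⬝ᵥ a := by
    have h1 : 0 ≤ a ⬝ᵥ a := by simpa using dotProduct_star_self_nonneg a
    refine h1.lt_of_ne' ?_
    rcases hne with h | h
    · simpa using h
    · rw [haabb]; simpa using h
  have hs : (√(a ⬝ᵥ a))⁻¹ * ((√(a ⬝ᵥ a))⁻¹ * (a ⬝ᵥ a)) = 1 := by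
    rw [← mul_assoc, ← mul_inv, Real.mul_self_sqrt hpos.le, inv_mul_cancel₀ hpos.ne']
  have hba : b ⬝ᵥ a = 0 := by rw [dotProduct_comm, hab]
  set s := (√(a ⬝ᵥ a))⁻¹ with hsdef
  clear_value s
  refine peel hA (Matrix.of ![s • a, s • b])ᵀ _ ?_ ?_ (by simpa using hc)
  · have : ∀ i j, (((Matrix.of ![s • a, s • b])ᵀ)ᵀ * (Matrix.of ![s • a, s • b])ᵀ) i j =
        (![s • a, s • b] i) ⬝ᵥ (![s • a, s • b] j) := fun i j => rfl
    ext i j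
    rw [this]
    fin_cases i <;> fin_cases j <;>
      simp [smul_dotProduct, dotProduct_smul, hab, hba, ← haabb, hs]
  · have : ∀ i j, (A * (Matrix.of ![s • a, s • b])ᵀ) i j = (A *ᵥ (![s • a, s • b] j)) i :=
      fun i j => rfl
    ext i j
    rw [this]
    fin_cases j <;> simp [mulVec_smul, ha, hb, mul_apply] <;> ring
end

/-- Real skew-symmetric matrices with the same characteristic polynomial are orthogonally
similar: a common eigenvalue splits off a common diagonal block of size `1` or `2`. -/
theorem orthSim_of_charpoly_eq (N : ℕ) : ∀ {ι κ : Type} [Fintype ι] [Fintype κ] [DecidableEq ι]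
    [DecidableEq κ] {A : Matrix ι ι ℝ} {B : Matrix κ κ ℝ}, Fintype.card ι = N → Aᵀ = -A →
    Bᵀ = -B → A.charpoly = B.charpoly → OrthSim A B := by
  induction N using Nat.strong_induction_on with
  | _ N ih =>
  intro ι κ _ _ _ _ A B hι hA hB hAB
  have hκ : Fintype.card κ = N := by
    rw [← hι, ← charpoly_natDegree_eq_dim A, hAB, charpoly_natDegree_eq_dim]
  rcases Nat.eq_zero_or_pos N with rfl | hN
  · have := Fintype.card_eq_zero_iff.1 hι
    have := Fintype.card_eq_zero_iff.1 hκ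
    exact ⟨0, by ext i; exact isEmptyElim i, by ext i; exact isEmptyElim i,
      by ext i; exact isEmptyElim i⟩
  obtain ⟨z, hz⟩ := IsAlgClosed.exists_root (A.charpoly.map Complex.ofRealHom) (by
    rw [degree_map, charpoly_degree_eq_dim, hι]
    exact_mod_cast hN.ne')
  have hzB : (B.charpoly.map Complex.ofRealHom).eval z = 0 := by rw [← hAB]; exact hz
  have hre := (exists_eigenpair hA hz).1
  by_cases him : z.im = 0
  · obtain rfl : z = 0 := Complex.ext hre him
    obtain ⟨A', hA', h1⟩ := peel_zero (ρ := Fin (N - 1)) hA hz (by simp; omega)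
    obtain ⟨B', hB', h2⟩ := peel_zero (ρ := Fin (N - 1)) hB hzB (by simp; omega)
    have h3 := ih (N - 1) (by omega) (by simp) hA' hB' (by
      rw [h1.charpoly_eq, h2.charpoly_eq, charpoly_fromBlocks_zero₁₂,
        charpoly_fromBlocks_zero₁₂] at hAB
      exact mul_left_cancel₀ (charpoly_monic _).ne_zero hAB)
    exact (h1.trans (h3.fromBlocks _)).trans h2.symm
  · have h2N : 2 ≤ N := by
      obtain ⟨-, a, b, hne, ha, hb, hab, haabb⟩ := exists_eigenpair hA hz
      by_contra! h
      obtain rfl : N = 1 := by omega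
      obtain ⟨i, hi⟩ := Fintype.card_eq_one_iff.1 hι
      have hu : (Finset.univ : Finset ι) = {i} := by ext x; simp [hi x]
      have hAi : A i i = 0 := by
        have := congrFun (congrFun hA i) i
        simp only [transpose_apply, Matrix.neg_apply] at this
        linarith
      have ha' := congrFun ha i
      have hb' := congrFun hb i
      simp only [mulVec, dotProduct, hu, Finset.sum_singleton, hAi, zero_mul, Pi.neg_apply,
        Pi.smul_apply, smul_eq_mul] at ha' hb'
      have hb0 : b i = 0 := by simpa [him] using ha'.symm
      have ha0 : a i = 0 := by simpa [him] using hb'.symm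
      rcases hne with h | h
      · exact h (funext fun x => by rw [hi x]; exact ha0)
      · exact h (funext fun x => by rw [hi x]; exact hb0)
    obtain ⟨A', hA', h1⟩ := peel_pair (ρ := Fin (N - 2)) hA him hz (by simp; omega)
    obtain ⟨B', hB', h2⟩ := peel_pair (ρ := Fin (N - 2)) hB him hzB (by simp; omega)
    have h3 := ih (N - 2) (by omega) (by simp) hA' hB' (by
      rw [h1.charpoly_eq, h2.charpoly_eq, charpoly_fromBlocks_zero₁₂,
        charpoly_fromBlocks_zero₁₂] at hAB
      exact mul_left_cancel₀ (charpoly_monic _).ne_zero hAB)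
    exact (h1.trans (h3.fromBlocks _)).trans h2.symm

/-! ### Partial fractions of interlacing sequences -/

/-- Partial fractions for interlacing sequences, by adjoining the smallest pair
`b n ≤ a n`: the quotient is multiplied by `1 + (a n - b n) / (t + b n)`. -/
theorem exists_residues (a b : ℕ → ℝ) (n : ℕ) (hb : ∀ i < n, 0 ≤ b i) (hba : ∀ i < n, b i ≤ a i)
    (hab : ∀ i j, i < j → j < n → a j ≤ b i) :
    ∃ β : ℕ → ℝ, (∀ i, 0 ≤ β i) ∧ ∀ t > 0, ∏ i ∈ Finset.range n, (t + a i) =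
      (∏ i ∈ Finset.range n, (t + b i)) * (1 + ∑ i ∈ Finset.range n, β i / (t + b i)) := by
  induction n with
  | zero => exact ⟨0, by simp, by simp⟩
  | succ n ih =>
    obtain ⟨β, hβ, h⟩ := ih (fun i hi => hb i (by omega)) (fun i hi => hba i (by omega))
      (fun i j hij hj => hab i j hij (by omega))
    have hbn := hb n (by omega)
    rcases (hba n (by omega)).eq_or_lt with he | hlt
    -- If `a n = b n`, the new factor is `1` and the new residue is `0`.
    · refine ⟨Function.update β n 0, fun i => ?_, fun t ht => ?_⟩
      · rcases eq_or_ne i n with rfl | hi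
        · simp
        · simp [hi, hβ]
      · have : ∑ i ∈ Finset.range n, Function.update β n 0 i / (t + b i) =
            ∑ i ∈ Finset.range n, β i / (t + b i) :=
          Finset.sum_congr rfl fun i hi => by
            rw [Function.update_of_ne (Finset.mem_range.1 hi).ne]
        rw [Finset.prod_range_succ, Finset.prod_range_succ, Finset.sum_range_succ, h t ht, this, ← he]
        simp
        ring
    -- Otherwise `b n < a n ≤ b i` for `i < n`, so all `b i - b n` below are positive.
    · have hgt : ∀ i < n, a n ≤ b i := fun i hi => hab i n hi (by omega)
      refine ⟨Function.update (fun i => if i < n then β i * (b i - a n) / (b i - b n) else 0) n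
        ((a n - b n) * (1 + ∑ i ∈ Finset.range n, β i / (b i - b n))), fun i => ?_, fun t ht => ?_⟩
      · rcases eq_or_ne i n with rfl | hi
        · rw [Function.update_self]
          refine mul_nonneg (by linarith) (add_nonneg zero_le_one (Finset.sum_nonneg fun j hj => ?_))
          have := hgt j (Finset.mem_range.1 hj)
          exact div_nonneg (hβ j) (by linarith)
        · rw [Function.update_of_ne hi]
          split_ifs with hin
          · have := hgt i hin
            exact div_nonneg (mul_nonneg (hβ i) (by linarith)) (by linarith)
          · exact le_rfl
      · rw [Finset.prod_range_succ, Finset.prod_range_succ, Finset.sum_range_succ, h t ht,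
          Function.update_self]
        have hs : ∑ i ∈ Finset.range n, Function.update
              (fun i => if i < n then β i * (b i - a n) / (b i - b n) else 0) n
              ((a n - b n) * (1 + ∑ i ∈ Finset.range n, β i / (b i - b n))) i / (t + b i) =
            (∑ i ∈ Finset.range n, β i / (t + b i)) * ((t + a n) / (t + b n)) -
            (a n - b n) / (t + b n) * ∑ i ∈ Finset.range n, β i / (b i - b n) := by
          rw [Finset.sum_mul, Finset.mul_sum, ← Finset.sum_sub_distrib]
          refine Finset.sum_congr rfl fun i hi => ?_
          have hin := Finset.mem_range.1 hi
          rw [Function.update_of_ne hin.ne, if_pos hin]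
          have h1 : b i - b n ≠ 0 := by have := hgt i hin; linarith
          have h2 : t + b i ≠ 0 := by have := hgt i hin; linarith
          have h3 : t + b n ≠ 0 := by linarith
          field_simp
          ring
        rw [hs]
        have h3 : t + b n ≠ 0 := by linarith
        field_simp
        ring

/-! ### The bordered matrix -/

/-- The characteristic polynomial of `[[0, A], [-Aᵀ, 0]]` at `x > 0` when `AᵀA` is a rank-one
perturbation of a diagonal matrix, by a Schur complement and the matrix determinant lemma. -/
theorem det_bordered {ι κ : Type} [Fintype ι] [Fintype κ] [DecidableEq ι] [DecidableEq κ]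
    (A : Matrix ι κ ℝ) (b v : κ → ℝ) (hA : Aᵀ * A = diagonal b + vecMulVec v v)
    (hb : ∀ i, 0 ≤ b i) (hc : Fintype.card κ ≤ Fintype.card ι) (x : ℝ) (hx : 0 < x) :
    (fromBlocks 0 A (-Aᵀ) 0).charpoly.eval x = x ^ (Fintype.card ι - Fintype.card κ) *
      ((∏ i, (x ^ 2 + b i)) * (1 + ∑ i, v i ^ 2 / (x ^ 2 + b i))) := by
  have hpos : ∀ i, 0 < x ^ 2 + b i := fun i => by have := hb i; positivity
  have hs : scalar (ι ⊕ κ) x - fromBlocks 0 A (-Aᵀ) 0 =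
      fromBlocks (x • 1) (-A) (Aᵀ) (x • 1) := by
    ext (i | i) (j | j) <;> simp [diagonal_apply, one_apply]
  have hdiag : (diagonal fun i => x ^ 2 + b i).det = ∏ i, (x ^ 2 + b i) := det_diagonal
  let _ : Invertible (x • (1 : Matrix ι ι ℝ)) :=
    ⟨x⁻¹ • 1, by simp [smul_smul, hx.ne'], by simp [smul_smul, hx.ne']⟩
  have hinv : ⅟(x • (1 : Matrix ι ι ℝ)) = x⁻¹ • 1 := rfl
  have hm : x • (1 : Matrix κ κ ℝ) - Aᵀ * (x⁻¹ • (1 : Matrix ι ι ℝ)) * (-A) =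
      x⁻¹ • (diagonal (fun i => x ^ 2 + b i) + replicateCol Unit v * replicateRow Unit v) := by
    rw [← vecMulVec_eq]
    have hd : diagonal (fun i => x ^ 2 + b i) = x ^ 2 • (1 : Matrix κ κ ℝ) + diagonal b := by
      ext i j
      by_cases h : i = j <;> simp [h]
    rw [hd, add_assoc, ← hA, smul_add, smul_smul]
    have : x⁻¹ * x ^ 2 = x := by field_simp
    simp [this]
  rw [eval_charpoly, hs, det_fromBlocks₁₁, hinv, hm, det_smul, det_smul, det_one, mul_one,
    det_add_replicateCol_mul_replicateRow (by
      rw [hdiag]; exact (Finset.prod_pos fun i _ => hpos i).ne'.isUnit), hdiag, det_unique]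
  have hI : (diagonal fun i => x ^ 2 + b i)⁻¹ = diagonal fun i => (x ^ 2 + b i)⁻¹ := by
    apply inv_eq_right_inv
    rw [diagonal_mul_diagonal, ← diagonal_one]
    congr 1
    ext i
    exact mul_inv_cancel₀ (hpos i).ne'
  have hsum : (1 + replicateRow Unit v * (diagonal fun i => x ^ 2 + b i)⁻¹ *
      replicateCol Unit v : Matrix Unit Unit ℝ) default default = 1 + ∑ i, v i ^ 2 / (x ^ 2 + b i) := by
    rw [hI, Matrix.add_apply, one_apply, if_pos rfl, mul_apply]
    congr 1
    refine Finset.sum_congr rfl fun i _ => ?_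
    rw [mul_diagonal, replicateRow_apply, replicateCol_apply]
    ring
  rw [hsum, ← mul_assoc]
  congr 1
  rw [inv_pow, ← div_eq_mul_inv, pow_sub₀ _ hx.ne' hc, div_eq_mul_inv]

/-- Two real polynomials agreeing at all positive reals are equal. -/
theorem poly_ext_pos {P Q : ℝ[X]} (h : ∀ x > 0, P.eval x = Q.eval x) : P = Q :=
  eq_of_infinite_eval_eq P Q ((Set.Ioi_infinite (0 : ℝ)).mono fun x hx => h x hx)

theorem charpoly_blocks_diagonal (m : ℕ) (ω : ℕ → ℝ) :
    (fromBlocks 0 (diagonal fun k : Fin m => ω k)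
      (-(diagonal fun k : Fin m => ω k)ᵀ) 0).charpoly =
      ∏ k ∈ Finset.range m, (X ^ 2 + Polynomial.C (ω k ^ 2)) := by
  refine poly_ext_pos fun x hx => ?_
  rw [det_bordered _ (fun k : Fin m => ω k ^ 2) 0 (by
    rw [diagonal_transpose, diagonal_mul_diagonal]
    ext i j
    by_cases h : i = j <;> simp [h, sq]) (fun j => by positivity) le_rfl x hx]
  simp [eval_prod, Finset.prod_range]

/-- One interlacing step: a skew-symmetric matrix with spectrum given by `η`, together with a
principal submatrix whose spectrum is given by `ω`. The case `n = m + 1` drops two dimensions from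
an even size, the case `n = m` drops one from an odd size. -/
theorem exists_bordered (m n : ℕ) (hmn : m ≤ n) (hnm : n ≤ m + 1) (η ω : ℕ → ℝ)
    (hω : ∀ k < m, 0 ≤ ω k) (hηω : ∀ k < m, ω k ≤ η k)
    (hωη : ∀ i j, i < j → j < n → η j ≤ ω i) (hη : ∀ k < n, 0 ≤ η k) :
    ∃ M : Matrix (Fin (m + 1) ⊕ Fin n) (Fin (m + 1) ⊕ Fin n) ℝ, Mᵀ = -M ∧
      M.charpoly = X ^ (m + 1 - n) *
        ∏ k ∈ Finset.range n, (X ^ 2 + Polynomial.C (η k ^ 2)) ∧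
      (M.submatrix (Sum.map (Fin.castSucc) (Fin.castLE hmn))
        (Sum.map (Fin.castSucc) (Fin.castLE hmn))).charpoly =
        ∏ k ∈ Finset.range m, (X ^ 2 + Polynomial.C (ω k ^ 2)) := by
  -- When `n = m + 1` the column `m` meets no `ω k`, so the sequence is continued by `0`.
  obtain ⟨β, hβ, hR⟩ := exists_residues (fun k => η k ^ 2) (fun k => if k < m then ω k ^ 2 else 0) n
    (fun k _ => by split_ifs <;> positivity)
    (fun k hk => by
      split_ifs with h
      · exact pow_le_pow_left₀ (hω k h) (hηω k h) 2
      · positivity)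
    (fun i j hij hj => by
      rw [if_pos (by omega)]
      exact pow_le_pow_left₀ (hη j hj) (hωη i j hij hj) 2)
  -- The rows of `A` are `ω 0 • e₀, …, ω (m - 1) • e_{m-1}, v` with `v j = √(β j)`.
  let A : Matrix (Fin (m + 1)) (Fin n) ℝ := Matrix.of fun i j =>
    Fin.lastCases (√(β j)) (fun i' : Fin m => if (i' : ℕ) = j then ω j else 0) i
  have hA : Aᵀ * A = diagonal (fun j : Fin n => if (j : ℕ) < m then ω j ^ 2 else 0) +
      vecMulVec (fun j : Fin n => √(β j)) (fun j : Fin n => √(β j)) := by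
    ext j j'
    rw [mul_apply, Fin.sum_univ_castSucc, Matrix.add_apply, vecMulVec_apply]
    congr 1
    · simp only [A, transpose_apply, of_apply, Fin.lastCases_castSucc, diagonal_apply]
      by_cases hj : (j : ℕ) < m
      · rw [Finset.sum_eq_single (⟨j, hj⟩ : Fin m)]
        · by_cases h : j = j'
          · subst h; simp [hj, sq]
          · have : (j : ℕ) ≠ j' := fun h' => h (Fin.ext h')
            simp [h, this]
        · intro i _ hi
          have : (i : ℕ) ≠ j := fun h' => hi (Fin.ext h')
          simp [this]
        · simp
      · rw [Finset.sum_eq_zero]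
        · simp [hj]
        · intro i _
          rw [if_neg (by omega), zero_mul]
    · simp [A]
  refine ⟨fromBlocks 0 A (-Aᵀ) 0, by simp [fromBlocks_transpose, fromBlocks_neg], ?_, ?_⟩
  · refine poly_ext_pos fun x hx => ?_
    rw [det_bordered A _ _ hA (fun j => by split_ifs <;> positivity) (by simpa using hnm) x hx]
    have := hR (x ^ 2) (by positivity)
    rw [Finset.prod_range, Finset.prod_range, Finset.sum_range] at this
    simp only [eval_mul, eval_pow, eval_X, eval_prod, eval_add, eval_C, Fintype.card_fin,
      Finset.prod_range, this, Real.sq_sqrt (hβ _)]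
  · have hsub : (fromBlocks 0 A (-Aᵀ) 0).submatrix (Sum.map (Fin.castSucc) (Fin.castLE hmn))
        (Sum.map (Fin.castSucc) (Fin.castLE hmn)) =
        fromBlocks 0 (diagonal fun k : Fin m => ω k) (-(diagonal fun k : Fin m => ω k)ᵀ) 0 := by
      ext (i | i) (j | j) <;> simp [A, diagonal_apply, Fin.ext_iff] <;> 
        grind
    rw [hsub, charpoly_blocks_diagonal]

/-! ### Iterating the interlacing step -/

/-- Interlacing with a gap of `m - r`, by induction on `m`. Here `n` is the number of `η k` in
the characteristic polynomial, which is `m` in even and `m - 1` in odd dimension. -/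
theorem exists_compression (m : ℕ) : ∀ (n r : ℕ) {ι : Type} [Fintype ι] [DecidableEq ι]
    (C : Matrix ι ι ℝ) (η ω : ℕ → ℝ), n ≤ m → m ≤ n + 1 → r ≤ n → Cᵀ = -C →
    C.charpoly = X ^ (m - n) * ∏ k ∈ Finset.range n, (X ^ 2 + Polynomial.C (η k ^ 2)) →
    (∀ i j, i ≤ j → j < m → η j ≤ η i) → (∀ k < m, 0 ≤ η k) →
    (∀ i j, i ≤ j → j < r → ω j ≤ ω i) →
    (∀ k < r, ω k ≤ η k ∧ η (m - r + k) ≤ ω k) →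
    ∃ V : Matrix ι (Fin r ⊕ Fin r) ℝ, Vᵀ * V = 1 ∧
      (Vᵀ * C * V).charpoly = ∏ k ∈ Finset.range r, (X ^ 2 + Polynomial.C (ω k ^ 2)) := by
  induction m with
  | zero =>
    intro n r ι _ _ C η ω hnm hmn hrn hC hchar _ _ _ _
    obtain rfl : n = 0 := by omega
    obtain rfl : r = 0 := by omega
    refine ⟨0, by ext i; exact isEmptyElim i, by simp [charpoly]⟩
  | succ m ih =>
    intro n r ι _ _ C η ω hnm hmn hrn hC hchar hηs hη0 hωs hint
    rcases Nat.lt_or_ge m r with hr | hr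
    · obtain rfl : n = m + 1 := by omega
      obtain rfl : r = m + 1 := by omega
      have he : ∏ k ∈ Finset.range (m + 1), (X ^ 2 + Polynomial.C (η k ^ 2)) =
          ∏ k ∈ Finset.range (m + 1), (X ^ 2 + Polynomial.C (ω k ^ 2)) := by
        refine Finset.prod_congr rfl fun k hk => ?_
        obtain ⟨h1, h2⟩ := hint k (Finset.mem_range.1 hk)
        rw [Nat.sub_self, zero_add] at h2
        rw [le_antisymm h1 h2]
      obtain ⟨V, h1, -, h3⟩ := orthSim_of_charpoly_eq _ rfl hC
        (B := fromBlocks 0 (diagonal fun k : Fin (m + 1) => ω k)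
          (-(diagonal fun k : Fin (m + 1) => ω k)ᵀ) 0)
        (by simp [fromBlocks_transpose, fromBlocks_neg, -diagonal_neg])
        (by rw [hchar, charpoly_blocks_diagonal, he]; simp)
      exact ⟨V, h1, by rw [h3, charpoly_blocks_diagonal]⟩
    · have hm : m ≤ n := by omega
      let τ : ℕ → ℝ := fun k => if k < r then max (ω k) (η (k + 1)) else η (k + 1)
      have hτη : ∀ k < m, η (k + 1) ≤ τ k := fun k _ => by
        simp only [τ]; split_ifs
        · exact le_max_right _ _
        · exact le_rfl
      have hητ : ∀ k < m, τ k ≤ η k := fun k hk => by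
        have := hηs k (k + 1) (by omega) (by omega)
        simp only [τ]; split_ifs with h
        · exact max_le (hint k h).1 this
        · exact this
      have hτ0 : ∀ k < m, 0 ≤ τ k := fun k hk => (hη0 (k + 1) (by omega)).trans (hτη k hk)
      have hτs : ∀ i j, i ≤ j → j < m → τ j ≤ τ i := fun i j hij hj => by
        have h1 := hηs (i + 1) (j + 1) (by omega) (by omega)
        simp only [τ]; split_ifs with h h' h'
        · exact max_le_max (hωs i j hij h) h1
        · omega
        · exact h1.trans (le_max_right _ _)
        · exact h1
      obtain ⟨M, hM, hMchar, hsub⟩ := exists_bordered m n hm hnm η τ hτ0 hητ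
        (fun i j hij hj => (hηs (i + 1) j (by omega) (by omega)).trans (hτη i (by omega)))
        (fun k hk => hη0 k (by omega))
      obtain ⟨V, h1, -, h3⟩ := orthSim_of_charpoly_eq _ rfl hC hM (by rw [hchar, hMchar])
      set f : Fin m ⊕ Fin m → Fin (m + 1) ⊕ Fin n :=
        Sum.map (Fin.castSucc) (Fin.castLE hm) with hf
      have hfi : Function.Injective f :=
        (Fin.castSucc_injective m).sumMap (Fin.castLE_injective hm)
      -- The columns of `E` are the standard basis vectors selected by `f`.
      let E : Matrix (Fin (m + 1) ⊕ Fin n) (Fin m ⊕ Fin m) ℝ :=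
        (1 : Matrix (Fin (m + 1) ⊕ Fin n) (Fin (m + 1) ⊕ Fin n) ℝ).submatrix id f
      have hE (Z : Matrix (Fin (m + 1) ⊕ Fin n) (Fin (m + 1) ⊕ Fin n) ℝ) :
          Eᵀ * Z * E = Z.submatrix f f := by
        ext i j
        simp [E, mul_apply, one_apply]
      have hEE : Eᵀ * E = 1 := by
        have := hE 1
        rwa [Matrix.mul_one, submatrix_one f hfi] at this
      obtain ⟨W, hW, hWchar⟩ := ih m r (M.submatrix f f) τ ω le_rfl (by omega) hr
        (by rw [transpose_submatrix, hM, submatrix_neg]; rfl) (by rw [hsub]; simp) hτs hτ0 hωs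
        (fun k hk => by
          obtain ⟨h4, h5⟩ := hint k hk
          refine ⟨by simp [τ, hk], ?_⟩
          have h6 : m + 1 - r + k = m - r + k + 1 := by omega
          rw [h6] at h5
          simp only [τ]; split_ifs with h
          · exact max_le (hωs _ _ (by omega) h) h5
          · exact h5)
      refine ⟨V * E * W, ?_, ?_⟩
      · calc (V * E * W)ᵀ * (V * E * W) = Wᵀ * (Eᵀ * (Vᵀ * V) * E) * W := by
              simp only [transpose_mul, Matrix.mul_assoc]
          _ = 1 := by simp [h1, hEE, hW]
      · have : (V * E * W)ᵀ * C * (V * E * W) = Wᵀ * (Eᵀ * (Vᵀ * C * V) * E) * W := by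
          simp only [transpose_mul, Matrix.mul_assoc]
        rw [this, h3, hE, hWchar]

/-- Lemma: sufficient Cauchy interlacing for real skew-symmetric matrices:
let `C ∈ ℝ^{p×p}` be skew-symmetric with eigenvalues `±η_ℓ i`, `η₁ ≥ … ≥ η_{⌈p/2⌉} ≥ 0`
(encoded via the characteristic polynomial
`charpoly(C) = X^{p mod 2} ∏_{ℓ=1}^{⌊p/2⌋}(X² + η_ℓ²)`), and let
`ω₁ ≥ … ≥ ω_r ≥ 0` satisfy `η_k ≥ ω_k ≥ η_{⌈p/2⌉−r+k}` for `k = 1,…,r`.  Then there is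
an orthogonal `Θ` such that the leading `2r×2r` principal submatrix of `ΘᵀCΘ` is
skew-symmetric with eigenvalues exactly `±ω_ℓ i` (encoded via its characteristic
polynomial `∏_{ℓ=1}^{r}(X² + ω_ℓ²)`). -/
theorem stmt19 (p r : ℕ) (hpr : 2 * r ≤ p)
    (C : Matrix (Fin p) (Fin p) ℝ) (hC : Cᵀ = -C)
    (η : ℕ → ℝ)
    (hηsorted : ∀ k l : ℕ, 1 ≤ k → k ≤ l → l ≤ (p + 1) / 2 → η l ≤ η k)
    (hηnonneg : ∀ k : ℕ, 1 ≤ k → k ≤ (p + 1) / 2 → 0 ≤ η k)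
    (hηchar : C.charpoly =
      X ^ (p % 2) * ∏ k ∈ Finset.Icc 1 (p / 2), (X ^ 2 + Polynomial.C ((η k) ^ 2)))
    (hηodd : p % 2 = 1 → η ((p + 1) / 2) = 0)
    (ω : ℕ → ℝ)
    (hωsorted : ∀ k l : ℕ, 1 ≤ k → k ≤ l → l ≤ r → ω l ≤ ω k)
    (hωnonneg : ∀ k : ℕ, 1 ≤ k → k ≤ r → 0 ≤ ω k)
    (hinter : ∀ k : ℕ, 1 ≤ k → k ≤ r →
      ω k ≤ η k ∧ η ((p + 1) / 2 - r + k) ≤ ω k) :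
    ∃ Θ : Matrix (Fin p) (Fin p) ℝ, Θᵀ * Θ = 1 ∧ Θ * Θᵀ = 1 ∧
      ((Θᵀ * C * Θ).submatrix (Fin.castLE hpr) (Fin.castLE hpr))ᵀ
        = -((Θᵀ * C * Θ).submatrix (Fin.castLE hpr) (Fin.castLE hpr)) ∧
      ((Θᵀ * C * Θ).submatrix (Fin.castLE hpr) (Fin.castLE hpr)).charpoly
        = ∏ k ∈ Finset.Icc 1 r, (X ^ 2 + Polynomial.C ((ω k) ^ 2)) := by
  have hprod : ∀ (q : ℕ) (g : ℕ → ℝ[X]),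
      ∏ k ∈ Finset.Icc 1 q, g k = ∏ k ∈ Finset.range q, g (k + 1) := by
    intro q g
    rw [Finset.range_eq_Ico, Finset.prod_Ico_add' g 0 q 1]
    rfl
  obtain ⟨V, hV, hVchar⟩ := exists_compression ((p + 1) / 2) (p / 2) r C (fun k => η (k + 1))
    (fun k => ω (k + 1)) (by omega) (by omega) (by omega) hC
    (by
      rw [hηchar, hprod]
      congr 2
      omega)
    (fun i j hij hj => hηsorted _ _ (by omega) (by omega) (by omega))
    (fun k hk => hηnonneg _ (by omega) (by omega))
    (fun i j hij hj => hωsorted _ _ (by omega) (by omega) (by omega))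
    (fun k hk => hinter (k + 1) (by omega) (by omega))
  obtain ⟨U, hU1, hU2⟩ := exists_extension (ρ := Fin (p - 2 * r)) V hV (by simp; omega)
  let e₁ : Fin r ⊕ Fin r ≃ Fin (2 * r) := finSumFinEquiv.trans (finCongr (by omega))
  let e : (Fin r ⊕ Fin r) ⊕ Fin (p - 2 * r) ≃ Fin p :=
    ((e₁.sumCongr (Equiv.refl _)).trans finSumFinEquiv).trans (finCongr (by omega))
  have he : ∀ i, e (Sum.inl i) = Fin.castLE hpr (e₁ i) := fun i => by
    ext; simp [e]
  have he' : ∀ i, e.symm (Fin.castLE hpr i) = Sum.inl (e₁.symm i) := fun i => by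
    rw [Equiv.symm_apply_eq, he, Equiv.apply_symm_apply]
  have hΘ : ((((fromCols V U).submatrix id e.symm)ᵀ * C *
      (fromCols V U).submatrix id e.symm).submatrix (Fin.castLE hpr) (Fin.castLE hpr)) =
      reindex e₁ e₁ (Vᵀ * C * V) := by
    ext i j
    simp [mul_apply, he']
  refine ⟨(fromCols V U).submatrix id e.symm, ?_, ?_, ?_, ?_⟩
  · rw [transpose_submatrix, ← submatrix_mul (fromCols V U)ᵀ (fromCols V U) e.symm id e.symm
      Function.bijective_id, hU1, submatrix_one_equiv]
  · rw [transpose_submatrix, submatrix_mul_equiv, hU2, submatrix_id_id]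
  · have hskew : (Vᵀ * C * V)ᵀ = -(Vᵀ * C * V) := by simp [hC, Matrix.mul_assoc]
    rw [hΘ, reindex_apply, transpose_submatrix, hskew, submatrix_neg]
    rfl
  · rw [hΘ, charpoly_reindex, hVchar, hprod]
end
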